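/- arXiv:1503.08544 — 2 statements merged into one kernel-verified Lean document; each statement's English description precedes it below -/
import Mathlib

section
/- Let f : ℝ² → ℝ² be a C^∞ map with f(0)=0 of the form f = (x, xy + y⁶ + Σ_{i+j≥7} a_{ij} x^i y^j). Then a_{08} − (3/5)a_{07}² ≠ 0 if and only if f is A-equivalent to (x,y) ↦ (x, xy + y⁶ + εy⁸ + αy⁹) for some ε ∈ {1,−1} and some α ∈ ℝ; and (a_{08} − (3/5)a_{07}² = 0 and a_{09} − (7/25)a_{07}³ ≠ 0) if and only if f is A-equivalent to (x,y) ↦ (x, xy + y⁶ + y⁹). -/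
open Filter Topology

noncomputable section

/-- Directional derivative of a scalar function. -/
def dop (v : ℝ × ℝ) (g : ℝ × ℝ → ℝ) : ℝ × ℝ → ℝ :=
  fun p => fderiv ℝ g p v

/-- Partial derivative operator in the first coordinate. -/
def pdx : (ℝ × ℝ → ℝ) → ℝ × ℝ → ℝ := dop (1, 0)

/-- Partial derivative operator in the second coordinate. -/
def pdy : (ℝ × ℝ → ℝ) → ℝ × ℝ → ℝ := dop (0, 1)

/-- Taylor coefficient `a_{ij} = ∂_x^i ∂_y^j g(0,0) / (i! j!)` of `g` at the origin. -/
def tcoeff (g : ℝ × ℝ → ℝ) (i j : ℕ) : ℝ :=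
  (pdx^[i] (pdy^[j] g)) 0 / (Nat.factorial i * Nat.factorial j)

/-- The Jacobian determinant `λ_f` of a map `f : ℝ² → ℝ²`. -/
def jacDet (f : ℝ × ℝ → ℝ × ℝ) (p : ℝ × ℝ) : ℝ :=
  (fderiv ℝ f p (1, 0)).1 * (fderiv ℝ f p (0, 1)).2 -
    (fderiv ℝ f p (1, 0)).2 * (fderiv ℝ f p (0, 1)).1

/-- `f` has corank one at `0` : the derivative of `f` at `0` has rank one. -/
def CorankOne (f : ℝ × ℝ → ℝ × ℝ) : Prop :=
  LinearMap.rank ((fderiv ℝ f 0).toLinearMap) = 1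

/-- `η` is a null vector field for `f` near `0`. -/
def IsNullVF (f η : ℝ × ℝ → ℝ × ℝ) : Prop :=
  η 0 ≠ 0 ∧ ∃ U ∈ 𝓝 (0 : ℝ × ℝ),
    ContDiffOn ℝ (⊤ : ℕ∞) η U ∧ ∀ p ∈ U, jacDet f p = 0 → fderiv ℝ f p (η p) = 0

/-- The derivative `(ηg)(p) = Dg(p)(η(p))` of `g` along the vector field `η`. -/
def etaD (η : ℝ × ℝ → ℝ × ℝ) (g : ℝ × ℝ → ℝ) : ℝ × ℝ → ℝ :=
  fun p => fderiv ℝ g p (η p)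

/-- The iterated derivative `η^k g` along the vector field `η`. -/
def etaIter (η : ℝ × ℝ → ℝ × ℝ) : ℕ → (ℝ × ℝ → ℝ) → ℝ × ℝ → ℝ
  | 0, g => g
  | k + 1, g => etaD η (etaIter η k g)

/-- The Hessian matrix of second partial derivatives of `g` at `0`. -/
def hess (g : ℝ × ℝ → ℝ) : Matrix (Fin 2) (Fin 2) ℝ :=
  !![pdx (pdx g) 0, pdx (pdy g) 0; pdy (pdx g) 0, pdy (pdy g) 0]

/-- `A^r`-equivalence of the `r`-jets at `0` of two map-germs `(ℝ²,0) → (ℝ²,0)`. -/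
def JetEquiv (r : ℕ) (f g : ℝ × ℝ → ℝ × ℝ) : Prop :=
  ∃ φ ψ : ℝ × ℝ → ℝ × ℝ,
    ContDiff ℝ (⊤ : ℕ∞) φ ∧ ContDiff ℝ (⊤ : ℕ∞) ψ ∧ φ 0 = 0 ∧ ψ 0 = 0 ∧
    Function.Bijective (⇑(fderiv ℝ φ 0)) ∧ Function.Bijective (⇑(fderiv ℝ ψ 0)) ∧
    ∀ i ≤ r, iteratedFDeriv ℝ i (ψ ∘ f ∘ φ) 0 = iteratedFDeriv ℝ i g 0

/-- `A`-equivalence of two map-germs `(ℝ²,0) → (ℝ²,0)`. -/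
def AEquiv (f g : ℝ × ℝ → ℝ × ℝ) : Prop :=
  ∃ φ ψ : ℝ × ℝ → ℝ × ℝ,
    ContDiff ℝ (⊤ : ℕ∞) φ ∧ ContDiff ℝ (⊤ : ℕ∞) ψ ∧ φ 0 = 0 ∧ ψ 0 = 0 ∧
    Function.Bijective (⇑(fderiv ℝ φ 0)) ∧ Function.Bijective (⇑(fderiv ℝ ψ 0)) ∧
    ∀ᶠ p in 𝓝 (0 : ℝ × ℝ), ψ (f (φ p)) = g p

/-- `f` has the form `(x, g(x,y))` where `g` is `C^∞` and the Taylor coefficients of `g`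
of total degree `< N` at the origin are prescribed by `P`. -/
def HasForm (f : ℝ × ℝ → ℝ × ℝ) (g : ℝ × ℝ → ℝ) (N : ℕ) (P : ℕ → ℕ → ℝ) : Prop :=
  ContDiff ℝ (⊤ : ℕ∞) g ∧ (∀ p, f p = (p.1, g p)) ∧
    ∀ i j, i + j < N → tcoeff g i j = P i j

local notation "Sm" => ContDiff ℝ ((⊤ : ℕ∞) : WithTop ℕ∞)

lemma param_int_nat (n : ℕ) {E G : Type} [NormedAddCommGroup E] [NormedSpace ℝ E]
    [FiniteDimensional ℝ E] [NormedAddCommGroup G] [NormedSpace ℝ G] [CompleteSpace G]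
    (F : E × ℝ → G) (hF : Sm F) : ContDiff ℝ n (fun p => ∫ s in (0:ℝ)..1, F (p, s)) := by
  induction n generalizing G with
  | zero =>
    refine contDiff_zero.2 ?_
    exact intervalIntegral.continuous_parametric_intervalIntegral_of_continuous' (f := fun p s => F (p, s)) hF.continuous 0 1
  | succ n ih =>
    have hD : Sm (fun q : E × ℝ => (fderiv ℝ F q).comp (ContinuousLinearMap.inl ℝ E ℝ)) := by
      have : Sm (fderiv ℝ F) := hF.fderiv_right (m := ((⊤ : ℕ∞) : WithTop ℕ∞)) (by simp)
      exact this.clm_comp contDiff_const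
    have key : ∀ p, HasFDerivAt (fun p => ∫ s in (0:ℝ)..1, F (p, s))
        (∫ s in (0:ℝ)..1, (fderiv ℝ F (p, s)).comp (ContinuousLinearMap.inl ℝ E ℝ)) p := by
      intro p
      have : ProperSpace E := FiniteDimensional.proper ℝ E
      obtain ⟨C, hC⟩ := ((isCompact_closedBall p 1).prod (isCompact_Icc (a := (0:ℝ)) (b := 1))).exists_bound_of_continuousOn hD.continuous.continuousOn
      have := intervalIntegral.hasFDerivAt_integral_of_dominated_of_fderiv_le (𝕜 := ℝ) (μ := MeasureTheory.volume)
        (F := fun p s => F (p, s)) (F' := fun p s => (fderiv ℝ F (p, s)).comp (ContinuousLinearMap.inl ℝ E ℝ))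
        (a := 0) (b := 1) (x₀ := p) (s := Metric.closedBall p 1) (bound := fun _ => C) (Metric.closedBall_mem_nhds p one_pos)
        (Eventually.of_forall fun x => (hF.continuous.comp (by fun_prop : Continuous fun s : ℝ => (x, s))).aestronglyMeasurable)
        ((hF.continuous.comp (by fun_prop : Continuous fun s : ℝ => (p, s))).intervalIntegrable _ _)
        ((hD.continuous.comp (by fun_prop : Continuous fun s : ℝ => (p, s))).aestronglyMeasurable)
        (Eventually.of_forall fun s hs x hx => hC (x, s) ⟨hx, by
          rw [Set.uIoc_of_le zero_le_one] at hs; exact ⟨hs.1.le, hs.2⟩⟩)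
        (by simp)
        (Eventually.of_forall fun s hs x hx => by
          have h1 : HasFDerivAt F (fderiv ℝ F (x, s)) (x, s) := (hF.differentiable (by simp)).differentiableAt.hasFDerivAt
          exact h1.comp x (hasFDerivAt_prodMk_left x s))
      exact this
    push_cast
    rw [contDiff_succ_iff_fderiv]
    refine ⟨fun p => (key p).differentiableAt, by simp, ?_⟩
    have : fderiv ℝ (fun p => ∫ s in (0:ℝ)..1, F (p, s)) = fun p => (∫ s in (0:ℝ)..1, (fderiv ℝ F (p, s)).comp (ContinuousLinearMap.inl ℝ E ℝ)) := funext fun p => (key p).fderiv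
    rw [this]
    exact ih _ hD

lemma param_int {E G : Type} [NormedAddCommGroup E] [NormedSpace ℝ E]
    [FiniteDimensional ℝ E] [NormedAddCommGroup G] [NormedSpace ℝ G] [CompleteSpace G]
    (F : E × ℝ → G) (hF : Sm F) : Sm (fun p => ∫ s in (0:ℝ)..1, F (p, s)) :=
  contDiff_infty.2 fun n => param_int_nat n F hF

/-- Hadamard's lemma with parameters. -/
lemma hadamard {E : Type} [NormedAddCommGroup E] [NormedSpace ℝ E] [FiniteDimensional ℝ E]
    (F : E × ℝ → ℝ) (hF : Sm F) : ∃ K : E × ℝ → ℝ, Sm K ∧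
      (∀ p w, F (p, w) = F (p, 0) + w * K (p, w)) ∧ ∀ p, HasDerivAt (fun w => F (p, w)) (K (p, 0)) 0 := by
  let K : E × ℝ → ℝ := fun q => ∫ s in (0:ℝ)..1, fderiv ℝ F (q.1, s * q.2) (0, 1)
  have hd : ∀ p w, HasDerivAt (fun w => F (p, w)) (fderiv ℝ F (p, w) (0, 1)) w := by
    intro p w
    have h1 : HasFDerivAt F (fderiv ℝ F (p, w)) (p, w) := (hF.differentiable (by simp)).differentiableAt.hasFDerivAt
    have h2 : HasDerivAt (fun w : ℝ => (p, w)) ((0 : E), (1:ℝ)) w := (hasDerivAt_const w p).prodMk (hasDerivAt_id w)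
    exact h1.comp_hasDerivAt w h2
  have hfd : Sm (fun q : E × ℝ => fderiv ℝ F q (0, 1)) :=
    (hF.fderiv_right (m := ((⊤ : ℕ∞) : WithTop ℕ∞)) (by simp)).clm_apply contDiff_const
  refine ⟨K, ?_, ?_, ?_⟩
  · exact param_int (fun r : (E × ℝ) × ℝ => fderiv ℝ F (r.1.1, r.2 * r.1.2) (0, 1))
      (hfd.comp (by fun_prop : Sm fun r : (E × ℝ) × ℝ => (r.1.1, r.2 * r.1.2)))
  · intro p w
    have hd' : ∀ s ∈ Set.uIcc (0:ℝ) 1, HasDerivAt (fun s => F (p, s * w)) (w * fderiv ℝ F (p, s * w) (0, 1)) s := by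
      intro s _
      have := (hd p (s * w)).comp s ((hasDerivAt_id s).mul_const w)
      simpa [mul_comm, Function.comp_def] using this
    have hc : Continuous fun s : ℝ => w * fderiv ℝ F (p, s * w) (0, 1) :=
      continuous_const.mul (hfd.continuous.comp (by fun_prop : Continuous fun s : ℝ => (p, s * w)))
    have := intervalIntegral.integral_eq_sub_of_hasDerivAt hd' (hc.intervalIntegrable _ _)
    simp only [intervalIntegral.integral_const_mul, one_mul, zero_mul] at this
    simp only [K]; linarith
  · intro p
    have := hd p 0
    simpa [K] using this

/-- Second order version. -/
lemma taylor2 {E : Type} [NormedAddCommGroup E] [NormedSpace ℝ E] [FiniteDimensional ℝ E]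
    (F : E × ℝ → ℝ) (hF : Sm F) : ∃ D : E → ℝ, ∃ Q : E × ℝ → ℝ, Sm D ∧ Sm Q ∧
      (∀ p, HasDerivAt (fun w => F (p, w)) (D p) 0) ∧
      (∀ p w, F (p, w) = F (p, 0) + w * D p + w ^ 2 * Q (p, w)) := by
  obtain ⟨K, hK, h1, h2⟩ := hadamard F hF
  obtain ⟨Q, hQ, h3, -⟩ := hadamard K hK
  refine ⟨fun p => K (p, 0), Q, hK.comp (by fun_prop : Sm fun p : E => (p, (0:ℝ))), hQ, h2, fun p w => ?_⟩
  rw [h1, h3 p w]; ring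

lemma hadamard1 (h : ℝ → ℝ) (hh : Sm h) : ∃ k : ℝ → ℝ, Sm k ∧ (∀ y, h y = h 0 + y * k y) ∧ k 0 = deriv h 0 := by
  obtain ⟨K, hK, h1, h2⟩ := hadamard (E := ℝ) (fun q => h q.2) (by fun_prop)
  exact ⟨fun y => K (0, y), hK.comp (by fun_prop : Sm fun y : ℝ => ((0:ℝ), y)), fun y => h1 0 y, (h2 0).deriv.symm⟩

lemma iteratedDeriv_y_mul (k : ℝ → ℝ) (hk : Sm k) (n : ℕ) :
    iteratedDeriv (n + 1) (fun y => y * k y) 0 = (n + 1) * iteratedDeriv n k 0 := by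
  have : ∀ n : ℕ, iteratedDeriv (n + 1) (fun y => y * k y) = fun y => y * iteratedDeriv (n+1) k y + (n + 1) * iteratedDeriv n k y := by
    intro n
    induction n with
    | zero =>
      funext y
      rw [iteratedDeriv_one]
      have := (hasDerivAt_id y).mul ((hk.differentiable (by simp)).differentiableAt (x := y)).hasDerivAt
      rw [show (fun y => y * k y) = (id * k) from rfl, this.deriv]
      simp [iteratedDeriv_one]; ring
    | succ n ih =>
      funext y
      rw [iteratedDeriv_succ, ih]
      have hd : ∀ m : ℕ, HasDerivAt (iteratedDeriv m k) (iteratedDeriv (m+1) k y) y := by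
        intro m
        rw [iteratedDeriv_succ]
        exact ((hk.differentiable_iteratedDeriv m (by exact_mod_cast WithTop.coe_lt_top m)).differentiableAt).hasDerivAt
      have := ((hasDerivAt_id y).mul (hd (n+1))).add ((hd n).const_mul ((n:ℝ)+1))
      have h2 := this.deriv
      simp only [id] at h2
      refine Eq.trans ?_ (h2.trans ?_)
      · rfl
      · push_cast; ring
  rw [this]; simp

/-- One-variable Taylor formula with smooth remainder. -/
lemma taylor1 (n : ℕ) (h : ℝ → ℝ) (hh : Sm h) : ∃ k : ℝ → ℝ, Sm k ∧
    ∀ y, h y = ∑ j ∈ Finset.range n, iteratedDeriv j h 0 / (Nat.factorial j) * y ^ j + y ^ n * k y := by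
  induction n generalizing h with
  | zero => exact ⟨h, hh, by simp⟩
  | succ n ih =>
    obtain ⟨k, hk, h1, -⟩ := hadamard1 h hh
    obtain ⟨k', hk', h2⟩ := ih k hk
    refine ⟨k', hk', fun y => ?_⟩
    rw [h1 y, Finset.sum_range_succ', h2 y]
    have : ∀ j, iteratedDeriv (j+1) h 0 = (j+1) * iteratedDeriv j k 0 := by
      intro j
      rw [← iteratedDeriv_y_mul k hk, show h = fun y => h 0 + y * k y from funext h1]
      simp [iteratedDeriv_const_add]
    simp only [this, iteratedDeriv_zero, Nat.factorial_succ]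
    have h3 : ∀ j ∈ Finset.range n, ((j:ℝ) + 1) * iteratedDeriv j k 0 / ((j+1) * j.factorial : ℕ) * y ^ (j+1)
      = y * (iteratedDeriv j k 0 / (j.factorial) * y ^ j) := by
      intro j _
      have : (j.factorial : ℝ) ≠ 0 := by positivity
      have : (j : ℝ) + 1 ≠ 0 := by positivity
      push_cast; field_simp; ring
    rw [Finset.sum_congr rfl h3, ← Finset.mul_sum]
    simp; ring

/-- Extension of a locally smooth function to a globally smooth one with the same germ. -/
lemma germ_ext {E : Type} [NormedAddCommGroup E] [NormedSpace ℝ E] [FiniteDimensional ℝ E]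
    (u : E → ℝ) (h : ∀ᶠ p in 𝓝 (0:E), ContDiffAt ℝ (⊤ : ℕ∞) u p) :
    ∃ v : E → ℝ, Sm v ∧ v =ᶠ[𝓝 0] u := by
  obtain ⟨r, hr, hb⟩ := Metric.eventually_nhds_iff_ball.1 h
  let b : ContDiffBump (0 : E) := ⟨r / 4, r / 2, by positivity, by linarith⟩
  refine ⟨fun p => b p * u p, ?_, ?_⟩
  · rw [contDiff_iff_contDiffAt]
    intro p
    by_cases hp : p ∈ Metric.ball (0:E) r
    · exact b.contDiff.contDiffAt.mul (hb p hp)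
    · have : (fun p => b p * u p) =ᶠ[𝓝 p] fun _ => 0 := by
        have hp2 : p ∈ (Metric.closedBall (0:E) (r/2))ᶜ := by
          simp only [Metric.mem_ball, not_lt] at hp
          simp only [Set.mem_compl_iff, Metric.mem_closedBall, not_le]; linarith
        filter_upwards [Metric.isClosed_closedBall.isOpen_compl.mem_nhds hp2] with q hq
        have : b q = 0 := b.zero_of_le_dist (by
          simp only [Set.mem_compl_iff, Metric.mem_closedBall, not_le] at hq; exact hq.le)
        simp [this]
      exact contDiffAt_const.congr_of_eventuallyEq this
  · filter_upwards [b.eventuallyEq_one] with p hp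
    simp [hp]

/-- Implicit function theorem, smooth, with globally defined solution. -/
lemma ift {E : Type} [NormedAddCommGroup E] [NormedSpace ℝ E] [FiniteDimensional ℝ E]
    (F : E × ℝ → ℝ) (hF : Sm F) (z0 c : ℝ) (h0 : F (0, z0) = 0)
    (hd : HasDerivAt (fun z => F (0, z)) c z0) (hc : c ≠ 0) :
    ∃ z : E → ℝ, Sm z ∧ z 0 = z0 ∧ (∀ᶠ p in 𝓝 0, F (p, z p) = 0) ∧
      ∀ᶠ q in 𝓝 ((0:E), z0), F q = 0 → z q.1 = q.2 := by
  have hinv : ∀ q : E × ℝ, fderiv ℝ F q (0, 1) ≠ 0 → (fderiv ℝ F q ∘L .inr ℝ E ℝ).IsInvertible := by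
    intro q hq
    refine ⟨ContinuousLinearEquiv.unitsEquivAut ℝ (Units.mk0 _ hq), ?_⟩
    ext
    simp
  have hd1 : fderiv ℝ F (0, z0) (0, 1) = c := by
    have h1 : HasFDerivAt F (fderiv ℝ F (0, z0)) (0, z0) := (hF.differentiable (by simp)).differentiableAt.hasFDerivAt
    have h2 : HasDerivAt (fun w : ℝ => ((0 : E), w)) ((0 : E), (1:ℝ)) z0 := (hasDerivAt_const z0 (0:E)).prodMk (hasDerivAt_id z0)
    exact (h1.comp_hasDerivAt z0 h2).unique hd
  have hi0 := hinv (0, z0) (by rw [hd1]; exact hc)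
  have c1 : ContDiffAt ℝ 1 F (0, z0) := hF.contDiffAt.of_le (by simp)
  let Z := c1.implicitFunction one_ne_zero hi0
  have hZ0 : Z 0 = z0 := c1.implicitFunction_apply_self one_ne_zero hi0
  have hZe : ∀ᶠ p in 𝓝 (0:E), F (p, Z p) = 0 := by
    have := c1.eventually_apply_implicitFunction one_ne_zero hi0
    simpa [h0] using this
  have hZu : ∀ᶠ q in 𝓝 ((0:E), z0), F q = 0 → Z q.1 = q.2 := by
    have := c1.eventually_apply_eq_iff_implicitFunction one_ne_zero hi0
    filter_upwards [this] with q hq h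
    exact hq.1 (by rw [h, h0])
  have hZc : ContDiffAt ℝ 1 Z 0 := c1.contDiffAt_implicitFunction one_ne_zero hi0
  have hZc' : ∀ᶠ p in 𝓝 (0:E), ContinuousAt Z p :=
    (hZc.eventually (by simp)).mono fun p hp => hp.continuousAt
  have hdc : Continuous fun q : E × ℝ => fderiv ℝ F q (0, 1) :=
    (hF.continuous_fderiv (by simp)).clm_apply continuous_const
  have hne : ∀ᶠ p in 𝓝 (0:E), fderiv ℝ F (p, Z p) (0, 1) ≠ 0 := by
    have : ContinuousAt (fun p : E => fderiv ℝ F (p, Z p) (0, 1)) 0 :=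
      hdc.continuousAt.comp (continuousAt_id.prodMk hZc.continuousAt)
    refine this.eventually_ne ?_
    rw [hZ0, hd1]; exact hc
  have hsm : ∀ᶠ p in 𝓝 (0:E), ContDiffAt ℝ (⊤ : ℕ∞) Z p := by
    filter_upwards [hZe.eventually_nhds, hZc', hne] with p h1 h2 h3
    have cI : ContDiffAt ℝ (⊤ : ℕ∞) F (p, Z p) := hF.contDiffAt
    have hi := hinv _ h3
    have hs := cI.contDiffAt_implicitFunction (by simp) hi
    refine hs.congr_of_eventuallyEq ?_
    have hu := cI.eventually_apply_eq_iff_implicitFunction (by simp) hi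
    have ht : Tendsto (fun q => (q, Z q)) (𝓝 p) (𝓝 (p, Z p)) := continuousAt_id.prodMk h2
    filter_upwards [ht.eventually hu, h1] with q hq1 hq2
    exact (hq1.1 (by rw [hq2, h1.self_of_nhds])).symm
  obtain ⟨z, hz, hzZ⟩ := germ_ext Z hsm
  refine ⟨z, hz, by rw [hzZ.self_of_nhds, hZ0], ?_, ?_⟩
  · filter_upwards [hzZ, hZe] with p h1 h2
    rw [h1, h2]
  · have ht : Tendsto (fun q : E × ℝ => q.1) (𝓝 ((0:E), z0)) (𝓝 0) := continuous_fst.tendsto ((0:E), z0)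
    filter_upwards [hZu, ht.eventually hzZ] with q h1 h2 h3
    rw [h2, h1 h3]

lemma div_of_eventually_zero (e : ℝ → ℝ) (he : Sm e) (h : ∀ᶠ y in 𝓝 (0:ℝ), e y = 0) (n : ℕ) :
    ∃ k : ℝ → ℝ, Sm k ∧ ∀ y, e y = y ^ n * k y := by
  obtain ⟨k, hk, h1⟩ := taylor1 n e he
  refine ⟨k, hk, fun y => ?_⟩
  rw [h1 y, Finset.sum_eq_zero, zero_add]
  intro j _
  have : e =ᶠ[𝓝 0] fun _ => 0 := h
  rw [this.iteratedDeriv_eq j]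
  simp [iteratedDeriv_fun_const_zero]

lemma borel_bound (χ : ℝ → ℝ) (hχ : Sm χ) (hs : HasCompactSupport χ) (n : ℕ) :
    ∃ M : ℝ, 0 ≤ M ∧ ∀ j ≤ n, ∀ m ≤ n, ∀ z, |iteratedDeriv m (fun z => z ^ j * χ z) z| ≤ M := by
  have h1 : ∀ j m : ℕ, ∃ M : ℝ, ∀ z, |iteratedDeriv m (fun z => z ^ j * χ z) z| ≤ M := by
    intro j m
    have hsm : Sm (fun z : ℝ => z ^ j * χ z) := by fun_prop
    have hc : HasCompactSupport (fun z : ℝ => z ^ j * χ z) := hs.mul_left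
    have hcd : Continuous (iteratedDeriv m (fun z => z ^ j * χ z)) :=
      hsm.continuous_iteratedDeriv m (by exact_mod_cast le_top)
    have hcc : HasCompactSupport (iteratedDeriv m (fun z => z ^ j * χ z)) := by
      have := hc.iteratedFDeriv (𝕜 := ℝ) m
      rw [iteratedDeriv_eq_equiv_comp]
      exact this.comp_left (by simp)
    obtain ⟨M, hM⟩ := hcd.bounded_above_of_compact_support hcc
    exact ⟨M, hM⟩
  choose M hM using h1
  have hM0 : ∀ j m, 0 ≤ M j m := fun j m => (abs_nonneg _).trans (hM j m 0)
  refine ⟨∑ j ∈ Finset.range (n+1), ∑ m ∈ Finset.range (n+1), M j m,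
    Finset.sum_nonneg fun j _ => Finset.sum_nonneg fun m _ => hM0 j m, ?_⟩
  intro j hj m hm z
  refine (hM j m z).trans ?_
  refine (Finset.single_le_sum (f := fun m => M j m) (fun m _ => hM0 j m) (Finset.mem_range.2 (Nat.lt_succ_of_le hm))).trans ?_
  exact Finset.single_le_sum (f := fun j => ∑ m ∈ Finset.range (n+1), M j m)
    (fun j _ => Finset.sum_nonneg fun m _ => hM0 j m) (Finset.mem_range.2 (Nat.lt_succ_of_le hj))

/-- Borel's lemma. -/
lemma borel_lemma1 (c : ℕ → ℝ) : ∃ H : ℝ → ℝ, Sm H ∧ ∀ K : ℕ, ∃ R : ℝ → ℝ, Sm R ∧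
    ∀ u, H u = ∑ k ∈ Finset.range K, c k * u ^ k + u ^ K * R u := by
  let b : ContDiffBump (0 : ℝ) := ⟨1, 2, by norm_num, by norm_num⟩
  have hbs : HasCompactSupport (b : ℝ → ℝ) := b.hasCompactSupport
  have hbd : Sm (b : ℝ → ℝ) := b.contDiff
  have hb1 : ∀ᶠ z in 𝓝 (0:ℝ), b z = 1 := b.eventuallyEq_one
  have hb0 : ∀ z : ℝ, 2 ≤ |z| → b z = 0 := fun z hz => b.zero_of_le_dist (by simpa [Real.dist_eq] using hz)
  choose M hM0 hM using borel_bound b hbd hbs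
  let l : ℕ → ℝ := fun k => 1 + 2 ^ k * |c k| * M k
  have hl1 : ∀ k, 1 ≤ l k := fun k => by
    have := hM0 k
    simp only [l]
    have : 0 ≤ 2 ^ k * |c k| * M k := by positivity
    linarith
  have hl0 : ∀ k, 0 < l k := fun k => lt_of_lt_of_le one_pos (hl1 k)
  let t : ℕ → ℕ → ℝ → ℝ := fun K k u => c (k + K) * (u ^ k * b (l (k + K) * u))
  have ht : ∀ K k, Sm (t K k) := fun K k => by
    have : Sm (fun u : ℝ => b (l (k + K) * u)) := hbd.comp (by fun_prop)
    exact contDiff_const.mul ((contDiff_id.pow k).mul this)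
  have hts : ∀ K k u, t K k u = (c (k+K) * ((l (k+K)) ^ k)⁻¹) * (fun z => z ^ k * b z) (l (k+K) * u) := by
    intro K k u
    have := (hl0 (k+K)).ne'
    simp only [t]; field_simp; ring
  have hR : ∀ K, Sm (fun u => ∑' k, t K k u) := by
    intro K
    refine contDiff_tsum_of_eventually (v := fun _ k => (1/2:ℝ)^k) (ht K) (fun _ _ => summable_geometric_two) ?_
    intro m _
    rw [Nat.cofinite_eq_atTop]
    filter_upwards [eventually_gt_atTop m] with k hk u
    rw [norm_iteratedFDeriv_eq_norm_iteratedDeriv, Real.norm_eq_abs]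
    rw [show t K k = fun u => (c (k+K) * ((l (k+K)) ^ k)⁻¹) * (fun z => z ^ k * b z) (l (k+K) * u) from funext (hts K k)]
    have hz : Sm (fun z : ℝ => z ^ k * b z) := by fun_prop
    have hzc : Sm (fun u : ℝ => (fun z => z ^ k * b z) (l (k+K) * u)) := hz.comp (by fun_prop)
    rw [iteratedDeriv_const_mul_field, iteratedDeriv_comp_const_mul (hz.of_le (by exact_mod_cast le_top)), abs_mul]
    simp only [abs_mul, abs_inv, abs_pow, abs_of_pos (hl0 (k+K))]
    have hB := hM (k+K) k (by omega) m (by omega) (l (k+K) * u)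
    set L := l (k+K) with hL
    have hL1 : 1 ≤ L := hl1 _
    have hL0 : 0 < L := hl0 _
    calc |c (k+K)| * (L ^ k)⁻¹ * (L ^ m * |iteratedDeriv m (fun z => z ^ k * b z) (L * u)|)
        ≤ |c (k+K)| * (L ^ k)⁻¹ * (L ^ m * M (k+K)) := by gcongr
      _ = |c (k+K)| * M (k+K) * (L ^ m / L ^ k) := by field_simp
      _ ≤ |c (k+K)| * M (k+K) * (1 / L) := by
          have h0 := hM0 (k+K)
          have : L ^ m / L ^ k ≤ 1 / L := by
            rw [div_le_div_iff₀ (by positivity) hL0, one_mul, ← pow_succ]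
            exact pow_le_pow_right₀ hL1 hk
          gcongr
      _ ≤ (1/2)^k := by
          rw [mul_one_div, div_le_iff₀ hL0]
          have h0 := hM0 (k+K)
          have e1 : 2 ^ (k+K) * (|c (k+K)| * M (k+K)) ≤ L := by simp only [hL, l]; nlinarith
          have e2 : (1:ℝ) ≤ (1/2)^k * 2 ^ (k+K) := by
            rw [pow_add, ← mul_assoc, ← mul_pow]
            norm_num
            exact one_le_pow₀ (by norm_num)
          have hA : 0 ≤ |c (k+K)| * M (k+K) := by positivity
          calc |c (k+K)| * M (k+K) ≤ ((1/2)^k * 2 ^ (k+K)) * (|c (k+K)| * M (k+K)) := le_mul_of_one_le_left hA e2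
            _ = (1/2)^k * (2 ^ (k+K) * (|c (k+K)| * M (k+K))) := by ring
            _ ≤ _ := by gcongr
  have hsum : ∀ K u, Summable (fun k => t K k u) := by
    intro K u
    have hb : ∀ k m, m < k → ‖t K k u‖ ≤ 2 ^ m * (1/2:ℝ)^k ∨ True := fun _ _ _ => Or.inr trivial
    refine Summable.of_norm_bounded_eventually (g := fun k => (1/2:ℝ)^k) summable_geometric_two ?_
    rw [Nat.cofinite_eq_atTop]
    filter_upwards [eventually_gt_atTop 0] with k hk
    rw [hts, norm_mul, norm_mul, Real.norm_eq_abs, norm_inv, norm_pow]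
    have hB := hM (k+K) k (by omega) 0 (by omega) (l (k+K) * u)
    rw [iteratedDeriv_zero] at hB
    set L := l (k+K) with hL
    have hL1 : 1 ≤ L := hl1 _
    have hL0 : 0 < L := hl0 _
    have h0 := hM0 (k+K)
    rw [Real.norm_of_nonneg hL0.le, Real.norm_eq_abs]
    have e1 : 2 ^ (k+K) * (|c (k+K)| * M (k+K)) ≤ L := by simp only [hL, l]; nlinarith
    have e3 : (L ^ k)⁻¹ ≤ L⁻¹ := by
      apply inv_anti₀ hL0
      exact le_self_pow₀ hL1 (by omega)
    calc |c (k+K)| * (L ^ k)⁻¹ * |(fun z => z ^ k * b z) (L * u)| ≤ |c (k+K)| * L⁻¹ * M (k+K) := by gcongr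
      _ = (|c (k+K)| * M (k+K)) * L⁻¹ := by ring
      _ ≤ (1/2)^k := by
        rw [← div_eq_mul_inv, div_le_iff₀ hL0]
        have e2 : (1:ℝ) ≤ (1/2)^k * 2 ^ (k+K) := by
            rw [pow_add, ← mul_assoc, ← mul_pow]
            norm_num
            exact one_le_pow₀ (by norm_num)
        have hA : 0 ≤ |c (k+K)| * M (k+K) := by positivity
        calc |c (k+K)| * M (k+K) ≤ ((1/2)^k * 2 ^ (k+K)) * (|c (k+K)| * M (k+K)) := le_mul_of_one_le_left hA e2
            _ = (1/2)^k * (2 ^ (k+K) * (|c (k+K)| * M (k+K))) := by ring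
            _ ≤ _ := by gcongr
  refine ⟨fun u => ∑' k, t 0 k u, hR 0, fun K => ?_⟩
  have hfin : ∀ k, ∃ e : ℝ → ℝ, Sm e ∧ ∀ u, u ^ k * (b (l k * u) - 1) = u ^ K * e u := by
    intro k
    apply div_of_eventually_zero (fun u => u ^ k * (b (l k * u) - 1))
    · have : Sm (fun u : ℝ => b (l k * u)) := hbd.comp (by fun_prop)
      exact (contDiff_id.pow k).mul (this.sub contDiff_const)
    · have : Tendsto (fun u : ℝ => l k * u) (𝓝 0) (𝓝 0) := by
        have : Continuous (fun u : ℝ => l k * u) := by fun_prop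
        simpa using this.tendsto 0
      filter_upwards [this.eventually hb1] with u hu
      simp [hu]
  choose e he hee using hfin
  refine ⟨fun u => (∑ k ∈ Finset.range K, c k * e k u) + ∑' k, t K k u, ?_, ?_⟩
  · exact (ContDiff.sum fun k _ => contDiff_const.mul (he k)).add (hR K)
  · intro u
    beta_reduce
    rw [← (hsum 0 u).sum_add_tsum_nat_add K]
    have h1 : ∑' k, t 0 (k + K) u = u ^ K * ∑' k, t K k u := by
      rw [← tsum_mul_left]
      congr 1; funext k
      simp only [t, add_zero]; ring
    rw [h1, mul_add, ← add_assoc, Finset.mul_sum, ← Finset.sum_add_distrib]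
    congr 1
    refine Finset.sum_congr rfl fun k _ => ?_
    simp only [t, add_zero]
    linear_combination c k * hee k u

/-- Flat functions. -/
def Flat (h : ℝ → ℝ) : Prop := ∀ n : ℕ, ∃ k : ℝ → ℝ, Sm k ∧ ∀ y, h y = y ^ n * k y

lemma exists_root5 : ∃ r : ℝ → ℝ, Continuous r ∧ (∀ u, r u ^ 5 = u) ∧ (∀ y, r (y ^ 5) = y) ∧
    ∀ u, u ≠ 0 → HasDerivAt r (5 * r u ^ 4)⁻¹ u := by
  have hmono : StrictMono fun y : ℝ => y ^ 5 := Odd.strictMono_pow (by decide)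
  have hsurj : Function.Surjective fun y : ℝ => y ^ 5 := by
    apply Continuous.surjective (by fun_prop)
    · exact tendsto_pow_atTop (by norm_num)
    · have h1 : Tendsto (fun y : ℝ => y ^ 5) atTop atTop := tendsto_pow_atTop (by norm_num)
      have h2 := tendsto_neg_atTop_atBot.comp (h1.comp tendsto_neg_atBot_atTop)
      refine h2.congr fun y => ?_
      simp only [Function.comp_apply]; ring
  let o := StrictMono.orderIsoOfSurjective _ hmono hsurj
  let e := o.toHomeomorph
  have h1 : ∀ u, (e.symm u) ^ 5 = u := fun u => e.apply_symm_apply u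
  have h2 : ∀ y, e.symm (y ^ 5) = y := fun y => e.symm_apply_apply y
  refine ⟨e.symm, e.symm.continuous, h1, h2, fun u hu => ?_⟩
  have hne : e.symm u ≠ 0 := fun h => hu (by rw [← h1 u, h]; norm_num)
  have hd : HasDerivAt (fun y : ℝ => y ^ 5) (5 * (e.symm u) ^ 4) (e.symm u) := by
    simpa using hasDerivAt_pow 5 (e.symm u)
  exact hd.of_local_left_inverse e.symm.continuous.continuousAt (by positivity) (Eventually.of_forall h1)

lemma flat_root (r : ℝ → ℝ) (hrc : Continuous r) (hr : ∀ u, r u ^ 5 = u)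
    (hrd : ∀ u, u ≠ 0 → HasDerivAt r (5 * r u ^ 4)⁻¹ u) (n : ℕ) (h : ℝ → ℝ) (hh : Flat h) :
    (ContDiff ℝ n fun u => h (r u)) ∧ HasDerivAt (fun u => h (r u)) 0 0 := by
  have hr0 : r 0 = 0 := by
    have := hr 0
    exact pow_eq_zero_iff (by norm_num) |>.1 this
  have hder : ∀ h : ℝ → ℝ, Flat h → ∃ h1, Flat h1 ∧ ∀ u, HasDerivAt (fun u => h (r u)) (h1 (r u)) u := by
    intro h hh
    have hsm : Sm h := by
      obtain ⟨k, hk, e⟩ := hh 0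
      have : h = k := funext fun y => by simpa using e y
      rwa [this]
    have hdd : ∀ n : ℕ, ∃ k : ℝ → ℝ, Sm k ∧ ∀ y, deriv h y = y ^ (n+4) * k y := by
      intro n
      obtain ⟨k, hk, e⟩ := hh (n+5)
      refine ⟨fun y => (n+5) * k y + y * deriv k y, ?_, fun y => ?_⟩
      · have : Sm (deriv k) := ((contDiff_infty_iff_deriv (𝕜 := ℝ)).1 hk).2
        fun_prop
      · have := (hasDerivAt_pow (n+5) y).mul (hk.differentiable (by simp)).differentiableAt.hasDerivAt
        rw [show h = (fun y => y ^ (n+5)) * k from funext e, this.deriv]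
        simp only [Nat.add_succ_sub_one]; push_cast; ring
    obtain ⟨k0, hk0, e0⟩ := hdd 0
    have hk0n : ∀ n : ℕ, ∃ k : ℝ → ℝ, Sm k ∧ ∀ y, k0 y = y ^ n * k y := by
      intro n
      obtain ⟨k, hk, e⟩ := hdd n
      refine ⟨k, hk, ?_⟩
      have : k0 = fun y => y ^ n * k y := by
        refine Continuous.ext_on (dense_compl_singleton (0:ℝ)) hk0.continuous (by have := hk.continuous; fun_prop) ?_
        intro y hy
        have hy : y ≠ 0 := hy
        have h1 := e0 y; have h2 := e y
        have : y ^ 4 * (k0 y - y ^ n * k y) = 0 := by rw [pow_add] at h2; linear_combination -h1 + h2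
        rcases mul_eq_zero.1 this with h | h
        · exact absurd h (by positivity)
        · linarith
      exact fun y => congrFun this y
    refine ⟨fun y => k0 y / 5, fun n => ?_, fun u => ?_⟩
    · obtain ⟨k, hk, e⟩ := hk0n n
      exact ⟨fun y => k y / 5, by fun_prop, fun y => by beta_reduce; rw [e y]; ring⟩
    · by_cases hu : u = 0
      · subst hu
        obtain ⟨k, hk, e⟩ := hh 10
        obtain ⟨k1, hk1, e1⟩ := hk0n 1
        have h1 : (fun u => h (r u)) = fun u => u * (u * k (r u)) := by
          funext u
          rw [e (r u), show (r u)^10 = (r u ^5)^2 by ring, hr]; ring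
        beta_reduce
        rw [h1, hr0, e1 0, hasDerivAt_iff_tendsto_slope]
        have hc : Continuous fun u => u * k (r u) := by have := hk.continuous; fun_prop
        have h2 := (hc.tendsto 0).mono_left (nhdsWithin_le_nhds (s := {0}ᶜ))
        simp only [zero_mul, pow_one, zero_div] at h2 ⊢
        refine h2.congr' ?_
        filter_upwards [self_mem_nhdsWithin] with u hu
        have hu : u ≠ 0 := hu
        simp [slope, hu]
      · have h1 := (hsm.differentiable (by simp)).differentiableAt (x := r u) |>.hasDerivAt
        have h2 := h1.comp u (hrd u hu)
        refine h2.congr_deriv ?_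
        have hne : r u ≠ 0 := fun h => hu (by rw [← hr u, h]; norm_num)
        rw [e0 (r u)]; field_simp; ring
  constructor
  · induction n generalizing h with
    | zero =>
      obtain ⟨h1, _, hd⟩ := hder h hh
      exact contDiff_zero.2 (continuous_iff_continuousAt.2 fun u => (hd u).continuousAt)
    | succ n ih =>
      obtain ⟨h1, hf, hd⟩ := hder h hh
      push_cast
      rw [contDiff_succ_iff_deriv]
      refine ⟨fun u => (hd u).differentiableAt, by simp, ?_⟩
      rw [show deriv (fun u => h (r u)) = fun u => h1 (r u) from funext fun u => (hd u).deriv]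
      exact ih h1 hf
  · obtain ⟨h1, hf, hd⟩ := hder h hh
    have := hd 0
    rw [hr0] at this
    obtain ⟨k, hk, e⟩ := hf 1
    rwa [e 0, pow_one, zero_mul] at this

/-- A flat function is a smooth function of `y ^ 5`. -/
lemma flat_pow5 (h : ℝ → ℝ) (hh : Flat h) : ∃ F : ℝ → ℝ, Sm F ∧ F 0 = 0 ∧ HasDerivAt F 0 0 ∧ ∀ y, F (y ^ 5) = h y := by
  obtain ⟨r, hrc, hr, hr2, hrd⟩ := exists_root5
  refine ⟨fun u => h (r u), contDiff_infty.2 fun n => (flat_root r hrc hr hrd n h hh).1, ?_, (flat_root r hrc hr hrd 0 h hh).2, fun y => by simp only [hr2]⟩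
  have hr0 : r 0 = 0 := by
    have := hr 0
    exact pow_eq_zero_iff (by norm_num) |>.1 this
  obtain ⟨k, hk, e⟩ := hh 1
  simp [hr0, e 0]

/-- Target diffeomorphism germs with upper triangular linear part. -/
def Good (ψ : ℝ × ℝ → ℝ × ℝ) : Prop := Sm ψ ∧ ψ 0 = 0 ∧ ∃ a b d : ℝ, a ≠ 0 ∧ d ≠ 0 ∧
  fderiv ℝ ψ 0 (1, 0) = (a, 0) ∧ fderiv ℝ ψ 0 (0, 1) = (b, d)

/-- Equivalence of plane curves. -/
def CE (γ γ' : ℝ → ℝ × ℝ) : Prop := ∃ (ψ : ℝ × ℝ → ℝ × ℝ) (τ : ℝ → ℝ), Good ψ ∧ Sm τ ∧ τ 0 = 0 ∧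
  deriv τ 0 ≠ 0 ∧ ∀ᶠ y in 𝓝 (0:ℝ), ψ (γ (τ y)) = γ' y

lemma CE.trans {γ γ' γ'' : ℝ → ℝ × ℝ} (h : CE γ γ') (h' : CE γ' γ'') : CE γ γ'' := by
  obtain ⟨ψ, τ, ⟨hψ, hψ0, a, b, d, ha, hd, e1, e2⟩, hτ, hτ0, hτd, h⟩ := h
  obtain ⟨ψ', τ', ⟨hψ', hψ0', a', b', d', ha', hd', e1', e2'⟩, hτ', hτ0', hτd', h'⟩ := h'
  refine ⟨ψ' ∘ ψ, τ ∘ τ', ⟨hψ'.comp hψ, by simp [hψ0, hψ0'], a * a', a' * b + d * b', d * d', mul_ne_zero ha ha', mul_ne_zero hd hd', ?_, ?_⟩, hτ.comp hτ', by simp [hτ0, hτ0'], ?_, ?_⟩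
  · rw [fderiv_comp _ ((hψ'.differentiable (by simp)).differentiableAt) ((hψ.differentiable (by simp)).differentiableAt), hψ0]
    simp only [ContinuousLinearMap.comp_apply, e1]
    rw [show ((a, 0) : ℝ × ℝ) = a • ((1:ℝ), (0:ℝ)) by simp, map_smul, e1']; simp
  · rw [fderiv_comp _ ((hψ'.differentiable (by simp)).differentiableAt) ((hψ.differentiable (by simp)).differentiableAt), hψ0]
    simp only [ContinuousLinearMap.comp_apply, e2]
    rw [show ((b, d) : ℝ × ℝ) = b • ((1:ℝ), (0:ℝ)) + d • ((0:ℝ), (1:ℝ)) by simp, map_add, map_smul, map_smul, e1', e2']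
    ext
    · simp; ring
    · simp
  · rw [deriv_comp _ ((hτ.differentiable (by simp)).differentiableAt) ((hτ'.differentiable (by simp)).differentiableAt), hτ0']
    exact mul_ne_zero hτd hτd'
  · have ht : Tendsto τ' (𝓝 0) (𝓝 0) := by simpa [hτ0'] using hτ'.continuous.tendsto 0
    filter_upwards [ht.eventually h, h'] with y h1 h2
    simp only [Function.comp_apply, h1, h2]

lemma good_mk (a b d : ℝ) (ha : a ≠ 0) (hd : d ≠ 0) (A B A1 A2 B1 B2 : ℝ × ℝ → ℝ) (hA : Sm A) (hB : Sm B)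
    (hA1 : Sm A1) (hA2 : Sm A2) (hB1 : Sm B1) (hB2 : Sm B2)
    (a1 : A1 0 = 0) (a2 : A2 0 = 0) (b1 : B1 0 = 0) (b2 : B2 0 = 0)
    (eA : ∀ p, A p = a * p.1 + b * p.2 + p.1 * A1 p + p.2 * A2 p)
    (eB : ∀ p, B p = d * p.2 + p.1 * B1 p + p.2 * B2 p) : Good (fun p => (A p, B p)) := by
  have key : ∀ (a b : ℝ) (A A1 A2 : ℝ × ℝ → ℝ), Sm A1 → Sm A2 → A1 0 = 0 → A2 0 = 0 →
      (∀ p, A p = a * p.1 + b * p.2 + p.1 * A1 p + p.2 * A2 p) →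
      ∀ v, fderiv ℝ A 0 v = a * v.1 + b * v.2 := by
    intro a b A A1 A2 h1 h2 z1 z2 e v
    have d1 := ((h1.differentiable (by simp)).differentiableAt (x := 0)).hasFDerivAt
    have d2 := ((h2.differentiable (by simp)).differentiableAt (x := 0)).hasFDerivAt
    have f1 : HasFDerivAt (fun p : ℝ × ℝ => p.1) (ContinuousLinearMap.fst ℝ ℝ ℝ) 0 := hasFDerivAt_fst
    have f2 : HasFDerivAt (fun p : ℝ × ℝ => p.2) (ContinuousLinearMap.snd ℝ ℝ ℝ) 0 := hasFDerivAt_snd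
    have := (((f1.const_mul a).add (f2.const_mul b)).add (f1.mul d1)).add (f2.mul d2)
    have h : A = _ := funext e
    rw [h]
    have h3 := this.fderiv
    refine Eq.trans (congrArg (fun L => L v) h3) ?_
    simp [z1, z2]
  have dA := (hA.differentiable (by simp)).differentiableAt (x := 0)
  have dB := (hB.differentiable (by simp)).differentiableAt (x := 0)
  have k1 := key a b A A1 A2 hA1 hA2 a1 a2 eA
  have k2 := key 0 d B B1 B2 hB1 hB2 b1 b2 (fun p => by rw [eB p]; ring)
  refine ⟨hA.prodMk hB, ?_, a, b, d, ha, hd, ?_, ?_⟩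
  · simp [eA, eB]
  · rw [dA.fderiv_prodMk dB]; simp [k1, k2]
  · rw [dA.fderiv_prodMk dB]; simp [k1, k2]

lemma good_id : Good (fun p => (p.1, p.2)) :=
  good_mk 1 0 1 one_ne_zero one_ne_zero _ _ (fun _ => 0) (fun _ => 0) (fun _ => 0) (fun _ => 0)
    (by fun_prop) (by fun_prop) (by fun_prop) (by fun_prop) (by fun_prop) (by fun_prop) rfl rfl rfl rfl (by simp) (by simp)

/-- Reparametrisation lemma. -/
lemma reparam (U V : ℝ → ℝ) (hU : Sm U) (hV : Sm V) (hU0 : U 0 ≠ 0)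
    (hUV : ∀ y, 5 * U y + y * deriv U y = 6 * V y + y * deriv V y) (j : ℕ) (hj : 1 ≤ j) (k : ℝ → ℝ) (hk : Sm k) :
    ∃ ν E : ℝ → ℝ, Sm ν ∧ Sm E ∧ (∀ᶠ y in 𝓝 (0:ℝ),
      (y * (1 + y ^ j * ν y)) ^ 5 * U (y * (1 + y ^ j * ν y)) + (y * (1 + y ^ j * ν y)) ^ (5 + j) * k (y * (1 + y ^ j * ν y))
        = y ^ 5 * U y) ∧
      ∀ᶠ y in 𝓝 (0:ℝ), (y * (1 + y ^ j * ν y)) ^ 6 * V (y * (1 + y ^ j * ν y)) = y ^ 6 * V y - y ^ (6 + j) * k y + y ^ (6 + 2 * j) * E y := by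
  have hder : ∀ (W : ℝ → ℝ), Sm W → ∀ (r : ℕ) (y : ℝ), HasDerivAt (fun w => (1 + w) ^ (r+1) * W (y * (1 + w))) ((r+1) * W y + y * deriv W y) 0 := by
    intro W hW r y
    have h1 : HasDerivAt (fun w : ℝ => 1 + w) 1 0 := (hasDerivAt_id (0:ℝ)).const_add 1
    have h2 := h1.pow (r+1)
    have h3 : HasDerivAt W (deriv W y) (y * (1 + 0)) := by
      rw [add_zero, mul_one]; exact ((hW.differentiable (by simp)).differentiableAt (x := y)).hasDerivAt
    have h4 := h3.comp (0:ℝ) (h1.const_mul y)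
    have h5 := h2.mul h4
    refine h5.congr_deriv ?_
    simp; ring
  obtain ⟨DU, QU, hDU, hQU, dU, eU⟩ := taylor2 (E := ℝ) (fun q => (1 + q.2) ^ 5 * U (q.1 * (1 + q.2))) (by fun_prop)
  obtain ⟨DV, QV, hDV, hQV, dV, eV⟩ := taylor2 (E := ℝ) (fun q => (1 + q.2) ^ 6 * V (q.1 * (1 + q.2))) (by fun_prop)
  obtain ⟨K, hK, eK, -⟩ := hadamard (E := ℝ) (fun q => (1 + q.2) ^ (5 + j) * k (q.1 * (1 + q.2))) (by fun_prop)
  have hDUV : ∀ y, DU y = DV y := by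
    intro y
    rw [(dU y).unique (hder U hU 4 y), (dV y).unique (hder V hV 5 y)]
    have := hUV y
    norm_num; linarith
  have hDU0 : DU 0 = 5 * U 0 := by
    rw [(dU 0).unique (hder U hU 4 0)]; norm_num
  have hj0 : (0:ℝ) ^ j = 0 := zero_pow (by omega)
  obtain ⟨ν, hν, -, hν2, -⟩ := ift (E := ℝ) (fun q => q.2 * DU q.1 + q.1 ^ j * q.2 ^ 2 * QU (q.1, q.1 ^ j * q.2)
      + (1 + q.1 ^ j * q.2) ^ (5 + j) * k (q.1 * (1 + q.1 ^ j * q.2))) (by fun_prop) (-k 0 / (5 * U 0)) (5 * U 0)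
      (by simp [hj0, hDU0, hU0]) (by
        simp only [hj0, hDU0, zero_mul, add_zero, one_pow, one_mul]
        have := ((hasDerivAt_id (-k 0 / (5 * U 0))).mul_const (5 * U 0)).add_const (k 0)
        simpa using this) (by simpa using hU0)
  refine ⟨ν, fun y => ν y ^ 2 * QV (y, y ^ j * ν y) - ν y ^ 2 * QU (y, y ^ j * ν y) - ν y * K (y, y ^ j * ν y), hν, by fun_prop, ?_, ?_⟩
  · filter_upwards [hν2] with y h
    have e1 := eU y (y ^ j * ν y)
    simp only at e1 h
    simp only [add_zero, mul_one, one_pow, one_mul] at e1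
    rw [mul_pow y _ 5, mul_assoc, e1, mul_pow y _ (5+j), pow_add y 5 j]
    linear_combination y ^ 5 * y ^ j * h
  · filter_upwards [hν2] with y h
    have e1 := eV y (y ^ j * ν y)
    have e2 := eK y (y ^ j * ν y)
    simp only at e1 h e2
    simp only [add_zero, mul_one, one_pow, one_mul] at e1 e2
    rw [mul_pow, mul_assoc, e1, pow_add y 6 j, pow_add y 6, pow_mul' y 2 j, ← hDUV]
    rw [e2] at h
    linear_combination y ^ 6 * y ^ j * h

lemma deriv_reparam (j : ℕ) (hj : 1 ≤ j) (ν : ℝ → ℝ) (hν : Sm ν) : HasDerivAt (fun y => y * (1 + y ^ j * ν y)) 1 0 := by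
  have h := (hν.differentiable (by simp)).differentiableAt (x := 0) |>.hasDerivAt
  have := (hasDerivAt_id (0:ℝ)).mul (((hasDerivAt_pow j (0:ℝ)).mul h).const_add 1)
  refine this.congr_deriv ?_
  have : (0:ℝ) ^ j = 0 := zero_pow (by omega)
  simp [this]

lemma master (U V : ℝ → ℝ) (hU : Sm U) (hV : Sm V) (hU0 : U 0 ≠ 0)
    (hUV : ∀ y, 5 * U y + y * deriv U y = 6 * V y + y * deriv V y) (j : ℕ) (hj : 1 ≤ j) (k l : ℝ → ℝ) (hk : Sm k) (hl : Sm l) :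
    ∃ E : ℝ → ℝ, Sm E ∧ CE (fun y => (y ^ 5 * U y + y ^ (5 + j) * k y, y ^ 6 * V y + y ^ (6 + j) * l y))
      (fun y => (y ^ 5 * U y, y ^ 6 * V y + y ^ (6 + j) * (l y - k y) + y ^ (6 + 2 * j) * E y)) := by
  obtain ⟨ν, E, hν, hE, e1, e2⟩ := reparam U V hU hV hU0 hUV j hj k hk
  obtain ⟨L, hL, eL, -⟩ := hadamard (E := ℝ) (fun q => (1 + q.2) ^ (6 + j) * l (q.1 * (1 + q.2))) (by fun_prop)
  refine ⟨fun y => E y + ν y * L (y, y ^ j * ν y), by fun_prop, fun p => (p.1, p.2), fun y => y * (1 + y ^ j * ν y), good_id, by fun_prop, by simp, ?_, ?_⟩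
  · rw [(deriv_reparam j hj ν hν).deriv]; exact one_ne_zero
  · filter_upwards [e1, e2] with y h1 h2
    simp only [Prod.mk.injEq]
    refine ⟨h1, ?_⟩
    have h3 := eL y (y ^ j * ν y)
    simp only [add_zero, mul_one, one_pow, one_mul] at h3
    rw [h2, mul_pow y _ (6+j), mul_assoc _ _ (l _), h3, pow_add y 6 (2*j), pow_mul' y 2 j, pow_add y 6 j]
    ring

def UN (ε α y : ℝ) : ℝ := -(6 + 8 * ε * y ^ 2 + 9 * α * y ^ 3)
def VN (ε α y : ℝ) : ℝ := -(5 + 7 * ε * y ^ 2 + 8 * α * y ^ 3)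

lemma smUN (ε α : ℝ) : Sm (UN ε α) := by unfold UN; fun_prop
lemma smVN (ε α : ℝ) : Sm (VN ε α) := by unfold VN; fun_prop
lemma UN0 (ε α : ℝ) : UN ε α 0 = -6 := by simp [UN]
lemma VN0 (ε α : ℝ) : VN ε α 0 = -5 := by simp [VN]

lemma UVN (ε α : ℝ) : ∀ y, 5 * UN ε α y + y * deriv (UN ε α) y = 6 * VN ε α y + y * deriv (VN ε α) y := by
  intro y
  have h : ∀ a b c : ℝ, HasDerivAt (fun y : ℝ => -(a + b * y ^ 2 + c * y ^ 3)) (-(b * (2 * y) + c * (3 * y ^ 2))) y := by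
    intro a b c
    have := ((((hasDerivAt_pow 2 y).const_mul b).const_add a).add ((hasDerivAt_pow 3 y).const_mul c)).neg
    refine this.congr_deriv ?_
    norm_num
  have h1 : deriv (UN ε α) y = _ := (h 6 (8 * ε) (9 * α)).deriv
  have h2 : deriv (VN ε α) y = _ := (h 5 (7 * ε) (8 * α)).deriv
  rw [h1, h2]; unfold UN VN; ring

/-- normal form curve with perturbation -/
def pc (ε α : ℝ) (n : ℕ) (ρ : ℝ → ℝ) (y : ℝ) : ℝ × ℝ := (y ^ 5 * UN ε α y, y ^ 6 * VN ε α y + y ^ n * ρ y)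

lemma step (ε α : ℝ) (n j : ℕ) (hj : 1 ≤ j) (hn : n + 1 ≤ 6 + 2 * j) (i : ℕ) (hi : n = 6 + j + i)
    (A B A1 A2 B1 B2 : ℝ × ℝ → ℝ) (hA1 : Sm A1) (hA2 : Sm A2) (hB1 : Sm B1) (hB2 : Sm B2)
    (a1 : A1 0 = 0) (a2 : A2 0 = 0) (b1 : B1 0 = 0) (b2 : B2 0 = 0)
    (eA : ∀ p, A p = p.1 * A1 p + p.2 * A2 p)
    (eB : ∀ p, B p = p.1 * B1 p + p.2 * B2 p)
    (ρ k l c : ℝ → ℝ) (hρ : Sm ρ) (hk : Sm k) (hl : Sm l) (hc : Sm c) (hc0 : c 0 ≠ 0)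
    (hA : ∀ y, A (pc ε α n ρ y) = y ^ (5 + j) * k y) (hB : ∀ y, B (pc ε α n ρ y) = y ^ (6 + j) * l y)
    (hlk : ∀ y, l y - k y = y ^ i * c y) :
    ∃ ρ' : ℝ → ℝ, Sm ρ' ∧ CE (pc ε α n ρ) (pc ε α (n+1) ρ') := by
  let s := - ρ 0 / c 0
  obtain ⟨m, hm, em, -⟩ := hadamard1 (fun y => ρ y + s * c y) (by fun_prop)
  have hs0 : ρ 0 + s * c 0 = 0 := by simp only [s]; field_simp; ring
  simp only [hs0, zero_add] at em
  obtain ⟨E, hE, hCE⟩ := master (UN ε α) (VN ε α) (smUN ε α) (smVN ε α) (by rw [UN0]; norm_num) (UVN ε α) j hj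
    (fun y => s * k y) (fun y => s * l y + y ^ i * ρ y) (by fun_prop) (by fun_prop)
  obtain ⟨t, ht⟩ : ∃ t, 6 + 2 * j = n + 1 + t := ⟨6 + 2 * j - (n + 1), by omega⟩
  refine ⟨fun y => m y + y ^ t * E y, by fun_prop, CE.trans (γ' := (fun y => (y ^ 5 * UN ε α y + y ^ (5 + j) * (s * k y), y ^ 6 * VN ε α y + y ^ (6 + j) * (s * l y + y ^ i * ρ y)))) ?_ ?_⟩
  · refine ⟨fun p => (p.1 + s * A p, p.2 + s * B p), id, ?_, contDiff_id, rfl, by simp, ?_⟩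
    · have hA' : Sm A := by rw [show A = _ from funext eA]; fun_prop
      have hB' : Sm B := by rw [show B = _ from funext eB]; fun_prop
      refine good_mk 1 0 1 one_ne_zero one_ne_zero _ _ (fun p => s * A1 p) (fun p => s * A2 p) (fun p => s * B1 p) (fun p => s * B2 p)
        (by fun_prop) (by fun_prop) (by fun_prop) (by fun_prop) (by fun_prop) (by fun_prop) (by simp [a1]) (by simp [a2]) (by simp [b1]) (by simp [b2])
        (fun p => by rw [eA p]; ring) (fun p => by rw [eB p]; ring)
    · refine Eventually.of_forall fun y => ?_
      simp only [id, hA, hB]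
      simp only [pc, Prod.mk.injEq]
      constructor
      · ring
      · rw [hi, pow_add y (6+j) i]; ring
  · convert hCE using 2 with y
    simp only [pc, Prod.mk.injEq, true_and]
    have e1 := em y; have e2 := hlk y
    rw [ht, show y ^ (n + 1 + t) = y ^ (n+1) * y ^ t from pow_add _ _ _]
    have : y ^ (6+j) * y ^ i * y = y ^ (n+1) := by rw [hi]; ring
    have e3 : y ^ (n+1) = y ^ (6 + j) * y ^ i * y := this.symm
    rw [e3]
    linear_combination (-y^(6+j) * y^i) * e1 - y ^ (6+j) * s * e2

lemma pc_eq (ε α : ℝ) (n i : ℕ) (hi : n = 6 + i) (ρ : ℝ → ℝ) (y : ℝ) :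
    pc ε α n ρ y = (y ^ 5 * UN ε α y, y ^ 6 * (VN ε α y + y ^ i * ρ y)) := by
  simp only [pc, hi]; congr 1; ring

lemma stepB (ε α : ℝ) (n j a b : ℕ) (hj : n = 6 + j) (h : n = 5 * a + 6 * b) (hj4 : 4 ≤ j)
   (M1 M2 : ℝ × ℝ → ℝ) (h1 : Sm M1) (h2 : Sm M2) (z1 : M1 0 = 0) (z2 : M2 0 = 0)
   (e : ∀ p : ℝ × ℝ, p.1 ^ a * p.2 ^ b = p.1 * M1 p + p.2 * M2 p)
   (ρ : ℝ → ℝ) (hρ : Sm ρ) : 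
    ∃ ρ' : ℝ → ℝ, Sm ρ' ∧ CE (pc ε α n ρ) (pc ε α (n+1) ρ') := by
  have hU := smUN ε α
  have hV := smVN ε α
  have hj0 : (0:ℝ) ^ j = 0 := zero_pow (by omega)
  refine step ε α n j (by omega) (by omega) 0 (by omega) (fun _ => 0) (fun p => p.1 ^ a * p.2 ^ b) (fun _ => 0) (fun _ => 0) M1 M2 
    (by fun_prop) (by fun_prop) h1 h2 rfl rfl z1 z2 (by simp) e
    ρ (fun _ => 0) (fun y => UN ε α y ^ a * (VN ε α y + y ^ j * ρ y) ^ b) (fun y => UN ε α y ^ a * (VN ε α y + y ^ j * ρ y) ^ b) hρ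
    (by fun_prop) (by fun_prop) (by fun_prop) ?_ (by simp) ?_ (by simp)
  · simp [hj0, UN0, VN0]
  · intro y
    rw [pc_eq ε α n j hj, ← hj, h, pow_add, pow_mul, pow_mul]; simp only [mul_pow _ _ a, mul_pow _ _ b]; ring

lemma stepA (ε α : ℝ) (n j q : ℕ) (hj : n = 6 + j) (h : n = 6 * q + 1) (hq : 2 ≤ q)
   (ρ : ℝ → ℝ) (hρ : Sm ρ) : 
    ∃ ρ' : ℝ → ℝ, Sm ρ' ∧ CE (pc ε α n ρ) (pc ε α (n+1) ρ') := by
  have hU := smUN ε α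
  have hV := smVN ε α
  have hj0 : (0:ℝ) ^ j = 0 := zero_pow (by omega)
  obtain ⟨r, rfl⟩ : ∃ r, q = r + 2 := ⟨q - 2, by omega⟩
  refine step ε α n j (by omega) (by omega) 0 (by omega) (fun p => p.2 ^ (r + 2)) (fun _ => 0)  (fun _ => 0) (fun p => p.2 ^ (r+1)) (fun _ => 0) (fun _ => 0)
    (by fun_prop) (by fun_prop) (by fun_prop) (by fun_prop) rfl (by simp) rfl rfl (fun p => by ring) (by simp)
    ρ (fun y => (VN ε α y + y ^ j * ρ y) ^ (r+2)) (fun _ => 0) (fun y => -(VN ε α y + y ^ j * ρ y) ^ (r+2)) hρ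
    (by fun_prop) (by fun_prop) (by fun_prop) ?_ ?_ (by simp) (by simp)
  · simp [hj0, VN0]
  · intro y
    rw [pc_eq ε α n j hj, show 5 + j = 6 * (r+2) by omega, pow_mul, ← mul_pow]

lemma step14a (ε α : ℝ) (hε : ε ≠ 0) (ρ : ℝ → ℝ) (hρ : Sm ρ) : 
    ∃ ρ' : ℝ → ℝ, Sm ρ' ∧ CE (pc ε α 14 ρ) (pc ε α 15 ρ') := by
  have hU := smUN ε α
  have hV := smVN ε α
  refine step ε α 14 6 (by omega) (by omega) 2 (by omega) (fun p => p.1 * p.2) (fun p => 6 / 5 * p.2 ^ 2)  (fun p => p.2) (fun p => 0) (fun _ => 0) (fun p => 6 / 5 * p.2)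
    (by fun_prop) (by fun_prop) (by fun_prop) (by fun_prop) rfl (by simp) rfl (by simp) (fun p => by ring) (fun p => by ring)
    ρ (fun y => UN ε α y * (VN ε α y + y ^ 8 * ρ y)) (fun y => 6 / 5 * (VN ε α y + y ^ 8 * ρ y) ^ 2)
    (fun y => (VN ε α y + y ^ 8 * ρ y) * (-(2/5) * ε - 3 / 5 * α * y + 6 / 5 * y ^ 6 * ρ y)) hρ
    (by fun_prop) (by fun_prop) (by fun_prop) ?_ ?_ ?_ ?_
  · simp [VN0, hε]
  · intro y
    rw [pc_eq ε α 14 8 (by omega)]; simp only []; ring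
  · intro y
    rw [pc_eq ε α 14 8 (by omega)]; simp only []; ring
  · intro y
    simp only [UN, VN]; ring

lemma step14b (α : ℝ) (hα : α ≠ 0) (ρ : ℝ → ℝ) (hρ : Sm ρ) : 
    ∃ ρ' : ℝ → ℝ, Sm ρ' ∧ CE (pc 0 α 14 ρ) (pc 0 α 15 ρ') := by
  have hU := smUN 0 α
  have hV := smVN 0 α
  refine step 0 α 14 5 (by omega) (by omega) 3 (by omega) (fun p => p.1 ^ 2) (fun p => 6 / 5 * (p.1 * p.2))  (fun p => p.1) (fun p => 0) (fun p => 6 / 5 * p.2) (fun p => 0)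
    (by fun_prop) (by fun_prop) (by fun_prop) (by fun_prop) rfl (by simp) (by simp) (by simp) (fun p => by ring) (fun p => by ring)
    ρ (fun y => UN 0 α y ^ 2) (fun y => 6 / 5 * (UN 0 α y * (VN 0 α y + y ^ 8 * ρ y)))
    (fun y => (UN 0 α y) * ( - 3 / 5 * α + 6 / 5 * y ^ 5 * ρ y)) hρ
    (by fun_prop) (by fun_prop) (by fun_prop) ?_ ?_ ?_ ?_
  · simp [UN0, hα]
  · intro y
    rw [pc_eq 0 α 14 8 (by omega)]; simp only []; ring
  · intro y
    rw [pc_eq 0 α 14 8 (by omega)]; simp only []; ring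
  · intro y
    simp only [UN, VN]; ring

lemma steps (ε α : ℝ) (h : ε ≠ 0 ∨ (ε = 0 ∧ α ≠ 0)) (ρ : ℝ → ℝ) (hρ : Sm ρ) :
    ∃ ρ' : ℝ → ℝ, Sm ρ' ∧ CE (pc ε α 10 ρ) (pc ε α 20 ρ') := by
  obtain ⟨ρ, hρ, c0⟩ := stepB ε α 10 4 2 0 (by omega) (by omega) (by omega) (fun p => p.1) (fun p => 0) (by fun_prop) (by fun_prop) rfl rfl (fun p => by ring) ρ hρ
  obtain ⟨ρ, hρ, c1⟩ := stepB ε α 11 5 1 1 (by omega) (by omega) (by omega) (fun p => p.2) (fun p => 0) (by fun_prop) (by fun_prop) rfl rfl (fun p => by ring) ρ hρ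
  obtain ⟨ρ, hρ, c2⟩ := stepB ε α 12 6 0 2 (by omega) (by omega) (by omega) (fun p => 0) (fun p => p.2) (by fun_prop) (by fun_prop) rfl rfl (fun p => by ring) ρ hρ
  obtain ⟨ρ, hρ, c3⟩ := stepA ε α 13 7 2 (by omega) (by omega) (by omega) ρ hρ
  obtain ⟨ρ, hρ, c4⟩ : ∃ ρ' : ℝ → ℝ, Sm ρ' ∧ CE (pc ε α 14 ρ) (pc ε α 15 ρ') := by
    rcases h with h | ⟨rfl, h⟩
    · exact step14a ε α h ρ hρ
    · exact step14b α h ρ hρ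
  obtain ⟨ρ, hρ, c5⟩ := stepB ε α 15 9 3 0 (by omega) (by omega) (by omega) (fun p => p.1 ^ 2) (fun p => 0) (by fun_prop) (by fun_prop) (by simp) rfl (fun p => by ring) ρ hρ
  obtain ⟨ρ, hρ, c6⟩ := stepB ε α 16 10 2 1 (by omega) (by omega) (by omega) (fun p => p.1 * p.2) (fun p => 0) (by fun_prop) (by fun_prop) (by simp) rfl (fun p => by ring) ρ hρ
  obtain ⟨ρ, hρ, c7⟩ := stepB ε α 17 11 1 2 (by omega) (by omega) (by omega) (fun p => p.2 ^ 2) (fun p => 0) (by fun_prop) (by fun_prop) (by simp) rfl (fun p => by ring) ρ hρ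
  obtain ⟨ρ, hρ, c8⟩ := stepB ε α 18 12 0 3 (by omega) (by omega) (by omega) (fun p => 0) (fun p => p.2 ^ 2) (by fun_prop) (by fun_prop) rfl (by simp) (fun p => by ring) ρ hρ
  obtain ⟨ρ, hρ, c9⟩ := stepA ε α 19 13 3 (by omega) (by omega) (by omega) ρ hρ
  exact ⟨ρ, hρ, c0.trans (c1.trans (c2.trans (c3.trans (c4.trans (c5.trans (c6.trans (c7.trans (c8.trans c9))))))))⟩

lemma elim1 (c r : ℝ → ℝ) (hc : Sm c) (hr : Sm r) (hc0 : c 0 ≠ 0) :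
    ∃ (d : ℝ) (r' : ℝ → ℝ), Sm r' ∧ ∀ y, r y = d * c y + y * r' y := by
  obtain ⟨k, hk, e, -⟩ := hadamard1 (fun y => r y - r 0 / c 0 * c y) (by fun_prop)
  refine ⟨r 0 / c 0, k, hk, fun y => ?_⟩
  have := e y
  have h0 : r 0 - r 0 / c 0 * c 0 = 0 := by field_simp; ring
  simp only [h0] at this
  linarith

lemma blk (U W : ℝ → ℝ) (hU : Sm U) (hW : Sm W) (hU0 : U 0 ≠ 0) (hW0 : W 0 ≠ 0) (K : ℕ) (r : ℝ → ℝ) (hr : Sm r) :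
    ∃ (d0 d1 d2 d3 d4 : ℝ) (r' : ℝ → ℝ), Sm r' ∧ ∀ y, r y = U y ^ K * (d0 * U y ^ 4 + d1 * y * U y ^ 3 * W y
      + d2 * y ^ 2 * U y ^ 2 * W y ^ 2 + d3 * y ^ 3 * U y * W y ^ 3 + d4 * y ^ 4 * W y ^ 4) + y ^ 5 * r' y := by
  obtain ⟨d0, r0, hr0, e0⟩ := elim1 (fun y => U y ^ K * U y ^ 4) r (by fun_prop) hr (by positivity)
  obtain ⟨d1, r1, hr1, e1⟩ := elim1 (fun y => U y ^ K * U y ^ 3 * W y) r0 (by fun_prop) hr0 (by positivity)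
  obtain ⟨d2, r2, hr2, e2⟩ := elim1 (fun y => U y ^ K * U y ^ 2 * W y ^ 2) r1 (by fun_prop) hr1 (by positivity)
  obtain ⟨d3, r3, hr3, e3⟩ := elim1 (fun y => U y ^ K * U y * W y ^ 3) r2 (by fun_prop) hr2 (by positivity)
  obtain ⟨d4, r4, hr4, e4⟩ := elim1 (fun y => U y ^ K * W y ^ 4) r3 (by fun_prop) hr3 (by positivity)
  refine ⟨d0, d1, d2, d3, d4, r4, hr4, fun y => ?_⟩
  rw [e0, e1, e2, e3, e4]; ring

lemma oneshot (ε α : ℝ) (ρ : ℝ → ℝ) (hρ : Sm ρ) :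
    CE (pc ε α 20 ρ) (fun y => (y ^ 5 * UN ε α y, y ^ 6 * VN ε α y)) := by
  have hU := smUN ε α
  have hV := smVN ε α
  set U := UN ε α with hUdef
  set V := VN ε α with hVdef
  have hU0 : U 0 ≠ 0 := by rw [hUdef, UN0]; norm_num
  let W : ℝ → ℝ := fun y => V y + y ^ 14 * ρ y
  have hW : Sm W := by simp only [W]; fun_prop
  have hW0 : W 0 ≠ 0 := by simp [W, hVdef, VN0]
  choose! d0 d1 d2 d3 d4 nx hnx enx using blk U W hU hW hU0 hW0
  let R : ℕ → ℝ → ℝ := fun K => Nat.rec ρ (fun K r => nx K r) K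
  have hR : ∀ K, Sm (R K) := by
    intro K
    induction K with
    | zero => exact hρ
    | succ K ih => exact hnx K _ ih
  have eR : ∀ K y, R K y = U y ^ K * (d0 K (R K) * U y ^ 4 + d1 K (R K) * y * U y ^ 3 * W y
      + d2 K (R K) * y ^ 2 * U y ^ 2 * W y ^ 2 + d3 K (R K) * y ^ 3 * U y * W y ^ 3 + d4 K (R K) * y ^ 4 * W y ^ 4) + y ^ 5 * R (K+1) y :=
    fun K y => enx K (R K) (hR K) y
  let X : ℝ → ℝ := fun y => y ^ 5 * U y
  let Y : ℝ → ℝ := fun y => y ^ 6 * W y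
  have hX : Sm X := by simp only [X]; fun_prop
  have hY : Sm Y := by simp only [Y]; fun_prop
  have eS : ∀ K y, y ^ 20 * ρ y = X y ^ 4 * (∑ k ∈ Finset.range K, d0 k (R k) * X y ^ k)
      + X y ^ 3 * Y y * (∑ k ∈ Finset.range K, d1 k (R k) * X y ^ k)
      + X y ^ 2 * Y y ^ 2 * (∑ k ∈ Finset.range K, d2 k (R k) * X y ^ k)
      + X y * Y y ^ 3 * (∑ k ∈ Finset.range K, d3 k (R k) * X y ^ k)
      + Y y ^ 4 * (∑ k ∈ Finset.range K, d4 k (R k) * X y ^ k) + y ^ 20 * (y ^ 5) ^ K * R K y := by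
    intro K y
    induction K with
    | zero => simp [R]
    | succ K ih =>
      rw [ih, eR K y]
      simp only [Finset.sum_range_succ]
      have hx : X y ^ K = (y ^ 5) ^ K * U y ^ K := mul_pow _ _ _
      rw [hx]
      simp only [X, Y]
      ring
  obtain ⟨H0, hH0, e0⟩ := borel_lemma1 (fun k => d0 k (R k))
  obtain ⟨H1, hH1, e1⟩ := borel_lemma1 (fun k => d1 k (R k))
  obtain ⟨H2, hH2, e2⟩ := borel_lemma1 (fun k => d2 k (R k))
  obtain ⟨H3, hH3, e3⟩ := borel_lemma1 (fun k => d3 k (R k))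
  obtain ⟨H4, hH4, e4⟩ := borel_lemma1 (fun k => d4 k (R k))
  let T : ℝ × ℝ → ℝ := fun p => p.1 ^ 4 * H0 p.1 + p.1 ^ 3 * p.2 * H1 p.1 + p.1 ^ 2 * p.2 ^ 2 * H2 p.1 + p.1 * p.2 ^ 3 * H3 p.1
    + p.2 ^ 4 * H4 p.1
  let D : ℝ → ℝ := fun y => y ^ 20 * ρ y - T (X y, Y y)
  have hD : Flat D := by
    intro n
    obtain ⟨S0, hS0, f0⟩ := e0 n
    obtain ⟨S1, hS1, f1⟩ := e1 n
    obtain ⟨S2, hS2, f2⟩ := e2 n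
    obtain ⟨S3, hS3, f3⟩ := e3 n
    obtain ⟨S4, hS4, f4⟩ := e4 n
    refine ⟨fun y => y ^ (4 * n) * (y ^ 20 * R n y - U y ^ n * (X y ^ 4 * S0 (X y) + X y ^ 3 * Y y * S1 (X y) + X y ^ 2 * Y y ^ 2 * S2 (X y)
      + X y * Y y ^ 3 * S3 (X y) + Y y ^ 4 * S4 (X y))), ?_, fun y => ?_⟩
    · have := hR n
      fun_prop
    · simp only [D, T]
      rw [eS n y, f0, f1, f2, f3, f4]
      have hx : X y ^ n = (y ^ 5) ^ n * U y ^ n := mul_pow _ _ _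
      have hy : y ^ n * y ^ (4 * n) = (y ^ 5) ^ n := by rw [← pow_add, ← pow_mul]; congr 1; ring
      rw [← mul_assoc (y ^ n) (y ^ (4 * n)), hy]
      generalize (∑ k ∈ Finset.range n, d0 k (R k) * X y ^ k) = s0
      generalize (∑ k ∈ Finset.range n, d1 k (R k) * X y ^ k) = s1
      generalize (∑ k ∈ Finset.range n, d2 k (R k) * X y ^ k) = s2
      generalize (∑ k ∈ Finset.range n, d3 k (R k) * X y ^ k) = s3
      generalize (∑ k ∈ Finset.range n, d4 k (R k) * X y ^ k) = s4
      rw [hx]; ring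
  -- straightening of X
  obtain ⟨ν, -, hν, -, hν1, -⟩ := reparam (fun _ => -6) (fun _ => -5) contDiff_const contDiff_const (by norm_num) (by intro y; simp; norm_num) 1 le_rfl
    (fun y => -(8 * ε * y + 9 * α * y ^ 2)) (by fun_prop)
  let θ : ℝ → ℝ := fun y => y * (1 + y ^ 1 * ν y)
  have hθ : Sm θ := by simp only [θ]; fun_prop
  have hθd : HasDerivAt θ 1 0 := deriv_reparam 1 le_rfl ν hν
  have hDθ : Flat (fun y => D (θ y)) := by
    intro n
    obtain ⟨k, hk, e⟩ := hD n
    refine ⟨fun y => (1 + y ^ 1 * ν y) ^ n * k (θ y), by fun_prop, fun y => ?_⟩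
    beta_reduce
    rw [e (θ y), show θ y ^ n = y ^ n * (1 + y ^ 1 * ν y) ^ n from mul_pow _ _ _]; ring
  obtain ⟨F, hF, hF0, hFd, eF⟩ := flat_pow5 _ hDθ
  have hθ0 : θ 0 = 0 := by simp [θ]
  have hmap : map θ (𝓝 0) = 𝓝 0 := by
    have hs : HasStrictDerivAt θ 1 0 := by
      have := (hθ.contDiffAt (x := 0)).hasStrictDerivAt (by simp)
      rwa [hθd.deriv] at this
    have := hs.map_nhds_eq one_ne_zero
    rwa [hθ0] at this
  have hDF : ∀ᶠ z in 𝓝 (0:ℝ), D z = F (-(X z) / 6) := by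
    rw [← hmap, eventually_map]
    filter_upwards [hν1] with y h
    rw [← eF y]
    congr 1
    have h2 : X (θ y) = (θ y) ^ 5 * (-6) + θ y ^ (5+1) * (-(8 * ε * θ y + 9 * α * θ y ^ 2)) := by
      simp only [X, hUdef, UN]; ring
    have h3 : X (θ y) = y ^ 5 * (-6) := h2.trans h
    rw [h3]; ring
  obtain ⟨F1, hF1, eF1, zF1⟩ := hadamard1 F hF
  have zF1 : F1 0 = 0 := by rw [zF1, hFd.deriv]
  refine ⟨fun p => (p.1, p.2 - (T p + F (-p.1 / 6))), id, ?_, contDiff_id, rfl, by simp, ?_⟩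
  · refine good_mk 1 0 1 one_ne_zero one_ne_zero _ _ (fun _ => 0) (fun _ => 0)
      (fun p => -(p.1 ^ 3 * H0 p.1 + p.1 ^ 2 * p.2 * H1 p.1 + p.1 * p.2 ^ 2 * H2 p.1 + p.2 ^ 3 * H3 p.1) + 1 / 6 * F1 (-p.1 / 6)) (fun p => - p.2 ^ 3 * H4 p.1)
        (by fun_prop) (by simp only [T]; fun_prop) (by fun_prop) (by fun_prop) (by fun_prop) (by fun_prop) rfl rfl (by simp [zF1]) (by simp)
        (fun p => by ring) (fun p => ?_)
    rw [eF1 (-p.1/6), hF0]; simp only [T]; ring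
  · filter_upwards [hDF] with y h
    have hp : pc ε α 20 ρ y = (X y, Y y) := pc_eq ε α 20 14 (by omega) ρ y
    simp only [id, hp, Prod.mk.injEq]
    refine ⟨rfl, ?_⟩
    rw [← h]; simp only [D, Y, W]; ring

lemma reduce (ε α : ℝ) (h : ε ≠ 0 ∨ (ε = 0 ∧ α ≠ 0)) (k l : ℝ → ℝ) (hk : Sm k) (hl : Sm l) :
    CE (fun y => (y ^ 5 * UN ε α y + y ^ 9 * k y, y ^ 6 * VN ε α y + y ^ 10 * l y)) (fun y => (y ^ 5 * UN ε α y, y ^ 6 * VN ε α y)) := by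
  obtain ⟨E, hE, c1⟩ := master (UN ε α) (VN ε α) (smUN ε α) (smVN ε α) (by rw [UN0]; norm_num) (UVN ε α) 4 (by omega) k l hk hl
  have hE2 : Sm (fun y => l y - k y + y ^ 4 * E y) := by fun_prop
  obtain ⟨ρ, hρ, c2⟩ := steps ε α h _ hE2
  refine CE.trans c1 (CE.trans ?_ (c2.trans (oneshot ε α ρ hρ)))
  refine ⟨fun p => (p.1, p.2), id, good_id, contDiff_id, rfl, by simp, Eventually.of_forall fun y => ?_⟩
  simp only [pc, id, Prod.mk.injEq, true_and]; ring

/-- The general discriminant curve. -/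
def gc (a7 a8 a9 : ℝ) (k l : ℝ → ℝ) (y : ℝ) : ℝ × ℝ :=
  (-(6 * y ^ 5 + 7 * a7 * y ^ 6 + 8 * a8 * y ^ 7 + 9 * a9 * y ^ 8) + y ^ 9 * k y,
   -(5 * y ^ 6 + 6 * a7 * y ^ 7 + 7 * a8 * y ^ 8 + 8 * a9 * y ^ 9) + y ^ 10 * l y)

lemma tpow_succ (b : ℝ) (n : ℕ) (c1 c2 c3 : ℝ) (h : ∃ q : ℝ → ℝ, Sm q ∧ ∀ y : ℝ, (1 + b * y + b ^ 2 * y ^ 2 + b ^ 3 * y ^ 3) ^ n =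
    1 + c1 * b * y + c2 * b ^ 2 * y ^ 2 + c3 * b ^ 3 * y ^ 3 + y ^ 4 * q y) :
    ∃ q : ℝ → ℝ, Sm q ∧ ∀ y : ℝ, (1 + b * y + b ^ 2 * y ^ 2 + b ^ 3 * y ^ 3) ^ (n+1) =
    1 + (1 + c1) * b * y + (1 + c1 + c2) * b ^ 2 * y ^ 2 + (1 + c1 + c2 + c3) * b ^ 3 * y ^ 3 + y ^ 4 * q y := by
  obtain ⟨q, hq, e⟩ := h
  refine ⟨fun y => (1 + b * y + b ^ 2 * y ^ 2 + b ^ 3 * y ^ 3) * q y + b ^ 4 * (c1 + c2 + c3) + b ^ 5 * (c2 + c3) * y + b ^ 6 * c3 * y ^ 2, by fun_prop, fun y => ?_⟩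
  rw [pow_succ, e y]; ring

lemma killa7 (a7 a8 a9 A B : ℝ) (hA : A = a8 - 3 / 5 * a7 ^ 2) (hB : B = a9 - 7 / 5 * a7 * a8 + 14 / 25 * a7 ^ 3) (k l : ℝ → ℝ) (hk : Sm k) (hl : Sm l) :
    ∃ k' l' : ℝ → ℝ, Sm k' ∧ Sm l' ∧ CE (gc a7 a8 a9 k l) (gc 0 A B k' l') := by
  obtain ⟨b, hb⟩ : ∃ b, a7 = -5 * b := ⟨-a7 / 5, by ring⟩
  have t1 : ∃ q : ℝ → ℝ, Sm q ∧ ∀ y : ℝ, (1 + b * y + b ^ 2 * y ^ 2 + b ^ 3 * y ^ 3) ^ 0 =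
    1 + 0 * b * y + 0 * b ^ 2 * y ^ 2 + 0 * b ^ 3 * y ^ 3 + y ^ 4 * q y := ⟨fun _ => 0, by fun_prop, by simp⟩
  have t1 := tpow_succ b _ _ _ _ t1
  have t2 := tpow_succ b _ _ _ _ t1
  have t3 := tpow_succ b _ _ _ _ t2
  have t4 := tpow_succ b _ _ _ _ t3
  have t5 := tpow_succ b _ _ _ _ t4
  have t6 := tpow_succ b _ _ _ _ t5
  have t7 := tpow_succ b _ _ _ _ t6
  have t8 := tpow_succ b _ _ _ _ t7
  have t9 := tpow_succ b _ _ _ _ t8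
  norm_num at t5 t6 t7 t8 t9
  obtain ⟨q5, h5, t5⟩ := t5
  obtain ⟨q6, h6, t6⟩ := t6
  obtain ⟨q7, h7, t7⟩ := t7
  obtain ⟨q8, h8, t8⟩ := t8
  obtain ⟨q9, h9, t9⟩ := t9
  let t : ℝ → ℝ := fun y => 1 + b * y + b ^ 2 * y ^ 2 + b ^ 3 * y ^ 3
  have ht : Sm t := by simp only [t]; fun_prop
  refine ⟨fun y => (-80) * b * a9 + (-280) * b ^ 2 * a8 + (2520) * b ^ 4 + (-396) * y * b ^ 2 * a9 + (-924) * y * b ^ 3 * a8 + (2520) * y * b ^ 5 + (-1440) * y ^ 2 * b ^ 3 * a9 + (-840) * y ^ 2 * b ^ 4 * a8 + (-1320) * y ^ 3 * b ^ 4 * a9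
      - (6 * q5 y + 7 * a7 * y * q6 y + 8 * a8 * y ^ 2 * q7 y + 9 * a9 * y ^ 3 * q8 y + b * (5 * y * q6 y + 6 * a7 * y ^ 2 * q7 y + 7 * a8 * y ^ 3 * q8 y + 8 * a9 * y ^ 4 * q9 y)) + t y ^ 9 * k (y * t y) + b * y * t y ^ 10 * l (y * t y),
    fun y => (-72) * b * a9 + (-252) * b ^ 2 * a8 + (2520) * b ^ 4 + (-360) * y * b ^ 2 * a9 + (-840) * y * b ^ 3 * a8 + (-1320) * y ^ 2 * b ^ 3 * a9
      - (5 * q6 y + 6 * a7 * y * q7 y + 7 * a8 * y ^ 2 * q8 y + 8 * a9 * y ^ 3 * q9 y) + t y ^ 10 * l (y * t y), by fun_prop, by fun_prop,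
    fun p => (p.1 + b * p.2, p.2), fun y => y * t y, ?_, by fun_prop, by simp, ?_, Eventually.of_forall fun y => ?_⟩
  · exact good_mk 1 b 1 one_ne_zero one_ne_zero _ _ (fun _ => 0) (fun _ => 0) (fun _ => 0) (fun _ => 0)
      (by fun_prop) (by fun_prop) (by fun_prop) (by fun_prop) (by fun_prop) (by fun_prop) rfl rfl rfl rfl (by intro p; ring) (by intro p; ring)
  · have := (hasDerivAt_id (0:ℝ)).mul ((ht.differentiable (by simp)).differentiableAt (x := 0)).hasDerivAt
    have h2 : deriv (fun y => y * t y) 0 = _ := this.deriv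
    rw [h2]; simp [t]
  · simp only [gc, Prod.mk.injEq, mul_pow y (t y)]
    have t5 := t5 y
    have t6 := t6 y
    have t7 := t7 y
    have t8 := t8 y
    have t9 := t9 y
    change t y ^ 5 = _ at t5
    change t y ^ 6 = _ at t6
    change t y ^ 7 = _ at t7
    change t y ^ 8 = _ at t8
    change t y ^ 9 = _ at t9
    generalize k (y * t y) = kk
    generalize l (y * t y) = ll
    generalize t y = T at t5 t6 t7 t8 t9 ⊢
    subst hA hB hb
    constructor
    · linear_combination (-6 * y ^ 5) * t5 + (30 * b) * y ^ 6 * t6 + (-8 * a8 * y ^ 7 + 30 * b ^ 2 * y ^ 7) * t7 + (-9 * a9 * y ^ 8 - 7 * a8 * b * y ^ 8) * t8 - (8 * a9 * b * y ^ 9) * t9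
    · linear_combination (-5 * y ^ 6) * t6 + (30 * b) * y ^ 7 * t7 + (-7 * a8 * y ^ 8) * t8 + (-8 * a9 * y ^ 9) * t9

lemma scale (A B c : ℝ) (hc : c ≠ 0) (k l : ℝ → ℝ) (hk : Sm k) (hl : Sm l) :
    ∃ k' l' : ℝ → ℝ, Sm k' ∧ Sm l' ∧ CE (gc 0 A B k l) (gc 0 (c ^ 2 * A) (c ^ 3 * B) k' l') := by
  refine ⟨fun y => c ^ 4 * k (c * y), fun y => c ^ 4 * l (c * y), by fun_prop, by fun_prop, fun p => ((c ^ 5)⁻¹ * p.1, (c ^ 6)⁻¹ * p.2), fun y => c * y, ?_, by fun_prop, by simp, ?_, Eventually.of_forall fun y => ?_⟩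
  · exact good_mk (c ^ 5)⁻¹ 0 (c ^ 6)⁻¹ (by positivity) (by positivity) _ _ (fun _ => 0) (fun _ => 0) (fun _ => 0) (fun _ => 0)
      (by fun_prop) (by fun_prop) (by fun_prop) (by fun_prop) (by fun_prop) (by fun_prop) rfl rfl rfl rfl (by intro p; ring) (by intro p; ring)
  · have := (hasDerivAt_id (0:ℝ)).const_mul c
    have h2 : deriv (fun y => c * y) 0 = _ := this.deriv
    rw [h2]; simpa using hc
  · simp only [gc, Prod.mk.injEq]
    constructor
    · field_simp; ring
    · field_simp; ring

/-- normal form curve -/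
def nc (ε α : ℝ) (y : ℝ) : ℝ × ℝ := (-(6 * y ^ 5 + 8 * ε * y ^ 7 + 9 * α * y ^ 8), -(5 * y ^ 6 + 7 * ε * y ^ 8 + 8 * α * y ^ 9))

lemma reduce2 (ε α : ℝ) (h : ε ≠ 0 ∨ (ε = 0 ∧ α ≠ 0)) (k l : ℝ → ℝ) (hk : Sm k) (hl : Sm l) :
    CE (gc 0 ε α k l) (nc ε α) := by
  convert reduce ε α h k l hk hl using 2 with y y
  · simp only [gc, UN, VN, Prod.mk.injEq]; constructor <;> ring
  · simp only [nc, UN, VN, Prod.mk.injEq]; constructor <;> ring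

lemma suff_curve1 (a7 a8 a9 : ℝ) (k l : ℝ → ℝ) (hk : Sm k) (hl : Sm l) (h : a8 - 3 / 5 * a7 ^ 2 ≠ 0) :
    ∃ ε : ℝ, (ε = 1 ∨ ε = -1) ∧ ∃ α, CE (gc a7 a8 a9 k l) (nc ε α) := by
  obtain ⟨k1, l1, hk1, hl1, c1⟩ := killa7 a7 a8 a9 _ _ rfl rfl k l hk hl
  set A := a8 - 3 / 5 * a7 ^ 2
  have hp : 0 < √|A| := Real.sqrt_pos.2 (abs_pos.2 h)
  obtain ⟨k2, l2, hk2, hl2, c2⟩ := scale A (a9 - 7 / 5 * a7 * a8 + 14 / 25 * a7 ^ 3) (√|A|)⁻¹ (by positivity) k1 l1 hk1 hl1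
  have hs : ((√|A|)⁻¹) ^ 2 * A = 1 ∨ ((√|A|)⁻¹) ^ 2 * A = -1 := by
    rw [inv_pow, Real.sq_sqrt (abs_nonneg A)]
    rcases abs_cases A with ⟨h1, _⟩ | ⟨h1, _⟩
    · left; rw [h1]; field_simp
    · right; rw [h1]; field_simp
  refine ⟨_, hs, _, c1.trans (c2.trans (reduce2 _ _ (Or.inl ?_) k2 l2 hk2 hl2))⟩
  rcases hs with h | h <;> rw [h] <;> norm_num

lemma suff_curve2 (a7 a8 a9 : ℝ) (k l : ℝ → ℝ) (hk : Sm k) (hl : Sm l) (h : a8 - 3 / 5 * a7 ^ 2 = 0) (h2 : a9 - 7 / 25 * a7 ^ 3 ≠ 0) :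
    CE (gc a7 a8 a9 k l) (nc 0 1) := by
  have hB : a9 - 7 / 25 * a7 ^ 3 = a9 - 7 / 5 * a7 * a8 + 14 / 25 * a7 ^ 3 := by
    linear_combination (7 / 5 * a7) * h
  obtain ⟨k1, l1, hk1, hl1, c1⟩ := killa7 a7 a8 a9 _ _ h.symm hB k l hk hl
  set B := a9 - 7 / 25 * a7 ^ 3
  obtain ⟨c, hc⟩ : ∃ c : ℝ, c ^ 3 = B⁻¹ := by
    have hsurj : Function.Surjective fun y : ℝ => y ^ 3 := by
      apply Continuous.surjective (by fun_prop)
      · exact tendsto_pow_atTop (by norm_num)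
      · have h1 : Tendsto (fun y : ℝ => y ^ 3) atTop atTop := tendsto_pow_atTop (by norm_num)
        have h2 := tendsto_neg_atTop_atBot.comp (h1.comp tendsto_neg_atBot_atTop)
        refine h2.congr fun y => ?_
        simp only [Function.comp_apply]; ring
    exact hsurj B⁻¹
  have hc0 : c ≠ 0 := by
    rintro rfl
    have : B⁻¹ ≠ 0 := inv_ne_zero h2
    exact this (by rw [← hc]; norm_num)
  obtain ⟨k2, l2, hk2, hl2, c2⟩ := scale 0 B c hc0 k1 l1 hk1 hl1
  rw [mul_zero, hc, inv_mul_cancel₀ h2] at c2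
  exact c1.trans (c2.trans (reduce2 0 1 (Or.inr ⟨rfl, one_ne_zero⟩) k2 l2 hk2 hl2))

lemma sm_pdy (g : ℝ × ℝ → ℝ) (hg : Sm g) : Sm (pdy g) :=
  (hg.fderiv_right (m := ((⊤ : ℕ∞) : WithTop ℕ∞)) (by simp)).clm_apply contDiff_const
lemma sm_pdx (g : ℝ × ℝ → ℝ) (hg : Sm g) : Sm (pdx g) :=
  (hg.fderiv_right (m := ((⊤ : ℕ∞) : WithTop ℕ∞)) (by simp)).clm_apply contDiff_const

lemma hd_pdy (g : ℝ × ℝ → ℝ) (hg : Sm g) (x y : ℝ) : HasDerivAt (fun y => g (x, y)) (pdy g (x, y)) y := by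
  have h1 : HasFDerivAt g (fderiv ℝ g (x, y)) (x, y) := (hg.differentiable (by simp)).differentiableAt.hasFDerivAt
  have h2 : HasDerivAt (fun w : ℝ => (x, w)) ((0 : ℝ), (1:ℝ)) y := (hasDerivAt_const y x).prodMk (hasDerivAt_id y)
  exact h1.comp_hasDerivAt y h2

lemma hd_pdx (g : ℝ × ℝ → ℝ) (hg : Sm g) (x y : ℝ) : HasDerivAt (fun x => g (x, y)) (pdx g (x, y)) x := by
  have h1 : HasFDerivAt g (fderiv ℝ g (x, y)) (x, y) := (hg.differentiable (by simp)).differentiableAt.hasFDerivAt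
  have h2 : HasDerivAt (fun w : ℝ => (w, y)) ((1 : ℝ), (0:ℝ)) x := (hasDerivAt_id x).prodMk (hasDerivAt_const x y)
  exact h1.comp_hasDerivAt x h2

lemma pd_comm (g : ℝ × ℝ → ℝ) (hg : Sm g) : pdy (pdx g) = pdx (pdy g) := by
  funext p
  have hf : DifferentiableAt ℝ (fderiv ℝ g) p :=
    ((hg.fderiv_right (m := ((⊤ : ℕ∞) : WithTop ℕ∞)) (by simp)).differentiable (by simp)).differentiableAt
  have h : ∀ v w : ℝ × ℝ, fderiv ℝ (fun q => fderiv ℝ g q v) p w = fderiv ℝ (fderiv ℝ g) p w v := by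
    intro v w
    rw [fderiv_clm_apply hf (differentiableAt_const v)]; simp
  have hs : IsSymmSndFDerivAt ℝ g p := hg.contDiffAt.isSymmSndFDerivAt (by simp; exact WithTop.coe_le_coe.2 le_top)
  show fderiv ℝ (fun q => fderiv ℝ g q (1,0)) p (0,1) = fderiv ℝ (fun q => fderiv ℝ g q (0,1)) p (1,0)
  rw [h, h]
  exact hs _ _

lemma pdy_iter_sm (g : ℝ × ℝ → ℝ) (hg : Sm g) (j : ℕ) : Sm (pdy^[j] g) := by
  induction j with
  | zero => exact hg
  | succ j ih => rw [Function.iterate_succ_apply']; exact sm_pdy _ ih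

lemma pdy_iter_pdx (g : ℝ × ℝ → ℝ) (hg : Sm g) (j : ℕ) : pdy^[j] (pdx g) = pdx (pdy^[j] g) := by
  induction j with
  | zero => rfl
  | succ j ih => rw [Function.iterate_succ_apply', ih, pd_comm _ (pdy_iter_sm g hg j), Function.iterate_succ_apply']

lemma iter_pdy (g : ℝ × ℝ → ℝ) (hg : Sm g) (x : ℝ) (j : ℕ) : iteratedDeriv j (fun y => g (x, y)) = fun y => (pdy^[j] g) (x, y) := by
  induction j generalizing g with
  | zero => rfl
  | succ j ih =>
    rw [iteratedDeriv_succ', show deriv (fun y => g (x, y)) = fun y => pdy g (x, y) from funext fun y => (hd_pdy g hg x y).deriv,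
      ih _ (sm_pdy g hg), Function.iterate_succ_apply]

lemma structG (g : ℝ × ℝ → ℝ) (hg : Sm g)
    (hP : ∀ i j, i + j < 7 → tcoeff g i j = if (i, j) = (1, 1) ∨ (i, j) = (0, 6) then 1 else 0) :
    g 0 = 0 ∧ pdx g 0 = 0 ∧ ∃ σ k l : ℝ → ℝ, Sm σ ∧ Sm k ∧ Sm l ∧ σ 0 = 0 ∧
      (∀ᶠ y in 𝓝 (0:ℝ), (σ y, g (σ y, y)) = gc (tcoeff g 0 7) (tcoeff g 0 8) (tcoeff g 0 9) k l y) ∧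
      (∀ᶠ y in 𝓝 (0:ℝ), pdy g (σ y, y) = 0) ∧
      (∀ᶠ p in 𝓝 (0:ℝ × ℝ), pdy g p = 0 → p.1 = σ p.2) := by
  have z : (0 : ℝ × ℝ) = ((0:ℝ), (0:ℝ)) := rfl
  have g0 : g 0 = 0 := by have := hP 0 0 (by omega); simpa [tcoeff] using this
  have gx0 : pdx g 0 = 0 := by have := hP 1 0 (by omega); simpa [tcoeff] using this
  refine ⟨g0, gx0, ?_⟩
  set a7 := tcoeff g 0 7 with ha7
  set a8 := tcoeff g 0 8 with ha8
  set a9 := tcoeff g 0 9 with ha9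
  obtain ⟨D, K, hD, hK, dD, eK⟩ := taylor2 (E := ℝ) (fun q => g (q.2, q.1)) (by fun_prop)
  simp only at dD eK
  have hDx : ∀ y, D y = pdx g (0, y) := fun y => (dD y).unique (hd_pdx g hg 0 y)
  obtain ⟨r, hr, er⟩ := taylor1 10 (fun y => g (0, y)) (by fun_prop)
  obtain ⟨r1, hr1, er1⟩ := taylor1 6 D hD
  have c0 : ∀ j, iteratedDeriv j (fun y => g (0, y)) 0 / (j.factorial) = tcoeff g 0 j := by
    intro j
    rw [iter_pdy g hg 0 j]; simp [tcoeff, z]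
  have c1 : ∀ j, iteratedDeriv j D 0 / (j.factorial) = tcoeff g 1 j := by
    intro j
    rw [show D = fun y => pdx g (0, y) from funext hDx, iter_pdy _ (sm_pdx g hg) 0 j, pdy_iter_pdx g hg]; simp [tcoeff, z]
  have er' : ∀ y, g (0, y) = y ^ 6 + a7 * y ^ 7 + a8 * y ^ 8 + a9 * y ^ 9 + y ^ 10 * r y := by
    intro y
    rw [er y]
    simp only [c0, Finset.sum_range_succ, Finset.sum_range_zero, ← ha7, ← ha8, ← ha9]
    rw [hP 0 0 (by omega), hP 0 1 (by omega), hP 0 2 (by omega), hP 0 3 (by omega), hP 0 4 (by omega), hP 0 5 (by omega), hP 0 6 (by omega)]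
    norm_num
  have er1' : ∀ y, D y = y + y ^ 6 * r1 y := by
    intro y
    rw [er1 y]
    simp only [c1, Finset.sum_range_succ, Finset.sum_range_zero]
    rw [hP 1 0 (by omega), hP 1 1 (by omega), hP 1 2 (by omega), hP 1 3 (by omega), hP 1 4 (by omega), hP 1 5 (by omega)]
    norm_num
  have eg : ∀ x y, g (x, y) = y ^ 6 + a7 * y ^ 7 + a8 * y ^ 8 + a9 * y ^ 9 + y ^ 10 * r y + x * (y + y ^ 6 * r1 y) + x ^ 2 * K (y, x) := by
    intro x y; rw [eK y x, er', er1']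
  let M : ℝ × ℝ → ℝ := pdx K
  have hM : Sm M := sm_pdx K hK
  have hdr : Sm (deriv r) := ((contDiff_infty_iff_deriv (𝕜 := ℝ)).1 hr).2
  have hdr1 : Sm (deriv r1) := ((contDiff_infty_iff_deriv (𝕜 := ℝ)).1 hr1).2
  have egy : ∀ x y, pdy g (x, y) = 6 * y ^ 5 + 7 * a7 * y ^ 6 + 8 * a8 * y ^ 7 + 9 * a9 * y ^ 8 + (10 * y ^ 9 * r y + y ^ 10 * deriv r y)
      + x * (1 + (6 * y ^ 5 * r1 y + y ^ 6 * deriv r1 y)) + x ^ 2 * M (y, x) := by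
    intro x y
    have h1 := hd_pdy g hg x y
    rw [show (fun y => g (x, y)) = fun y => y ^ 6 + a7 * y ^ 7 + a8 * y ^ 8 + a9 * y ^ 9 + y ^ 10 * r y + x * (y + y ^ 6 * r1 y) + x ^ 2 * K (y, x) from funext (eg x)] at h1
    have dr := ((hr.differentiable (by simp)).differentiableAt (x := y)).hasDerivAt
    have dr1 := ((hr1.differentiable (by simp)).differentiableAt (x := y)).hasDerivAt
    have h2 := ((((((hasDerivAt_pow 6 y).add ((hasDerivAt_pow 7 y).const_mul a7)).add ((hasDerivAt_pow 8 y).const_mul a8)).add ((hasDerivAt_pow 9 y).const_mul a9)).add ((hasDerivAt_pow 10 y).mul dr)).add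
      (((hasDerivAt_id y).add ((hasDerivAt_pow 6 y).mul dr1)).const_mul x)).add ((hd_pdx K hK y x).const_mul (x ^ 2))
    have h3 := h1.unique h2
    rw [h3]; norm_num; ring
  -- the critical curve
  obtain ⟨s, hs, hs0, hs1, -⟩ := ift (E := ℝ) (fun q => 6 + 7 * a7 * q.1 + 8 * a8 * q.1 ^ 2 + 9 * a9 * q.1 ^ 3 + q.1 ^ 4 * (10 * r q.1 + q.1 * deriv r q.1)
      + q.2 * (1 + q.1 ^ 5 * (6 * r1 q.1 + q.1 * deriv r1 q.1)) + q.1 ^ 5 * q.2 ^ 2 * M (q.1, q.1 ^ 5 * q.2)) (by fun_prop) (-6) 1 (by simp)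
      (by simpa using (hasDerivAt_id (-6:ℝ)).const_add 6) one_ne_zero
  simp only at hs1
  let σ : ℝ → ℝ := fun y => y ^ 5 * s y
  have hσ : Sm σ := by simp only [σ]; fun_prop
  have hσ0 : σ 0 = 0 := by simp [σ]
  let k1 : ℝ → ℝ := fun y => -(10 * r y + y * deriv r y) - s y * y * (6 * r1 y + y * deriv r1 y) - y * s y ^ 2 * M (y, y ^ 5 * s y)
  have hk1 : Sm k1 := by simp only [k1]; fun_prop
  have hcrit : ∀ᶠ y in 𝓝 (0:ℝ), pdy g (σ y, y) = 0 := by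
    filter_upwards [hs1] with y h
    rw [egy]; simp only [σ]
    linear_combination y ^ 5 * h
  refine ⟨σ, k1, fun y => r y + k1 y + s y * y * r1 y + s y ^ 2 * K (y, σ y), hσ, hk1, by fun_prop, hσ0, ?_, hcrit, ?_⟩
  · filter_upwards [hs1] with y h
    rw [eg]
    simp only [gc, Prod.mk.injEq, σ, k1]
    constructor
    · linear_combination y ^ 5 * h
    · linear_combination y ^ 6 * h
  · obtain ⟨t, ht, ht0, -, ht2⟩ := ift (E := ℝ) (fun q => pdy g (q.2, q.1)) (by have := sm_pdy g hg; fun_prop) 0 1 (by simp [egy])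
      (by
        have h1 := hd_pdx (pdy g) (sm_pdy g hg) 0 0
        have h2 : pdx (pdy g) (0, 0) = 1 := by
          have := hP 1 1 (by omega)
          change pdx (pdy g) 0 = 1
          simpa [tcoeff] using this
        rwa [h2] at h1) one_ne_zero
    have hc : Tendsto (fun y => (y, σ y)) (𝓝 0) (𝓝 ((0:ℝ), (0:ℝ))) := by
      have : Continuous fun y => (y, σ y) := by have := hσ.continuous; fun_prop
      simpa [hσ0] using this.tendsto 0
    have he : ∀ᶠ y in 𝓝 (0:ℝ), t y = σ y := by
      filter_upwards [hc.eventually ht2, hcrit] with y h1 h2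
      exact h1 h2
    have hsw : Tendsto (fun p : ℝ × ℝ => (p.2, p.1)) (𝓝 0) (𝓝 ((0:ℝ), (0:ℝ))) := by
      have : Continuous fun p : ℝ × ℝ => (p.2, p.1) := by fun_prop
      simpa using this.tendsto 0
    have hsn : Tendsto (fun p : ℝ × ℝ => p.2) (𝓝 0) (𝓝 (0:ℝ)) := by
      simpa using (continuous_snd (X := ℝ) (Y := ℝ)).tendsto 0
    filter_upwards [hsw.eventually ht2, hsn.eventually he] with p h1 h2 h3
    rw [← h2, h1 h3]

def NN (ε α y : ℝ) : ℝ := y ^ 6 + ε * y ^ 8 + α * y ^ 9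
def NP (ε α y : ℝ) : ℝ := 6 * y ^ 5 + 8 * ε * y ^ 7 + 9 * α * y ^ 8
def nR (ε α y v : ℝ) : ℝ := (15*y^4+20*y^3*v+15*y^2*v^2+6*y*v^3+v^4)
  + ε * (28*y^6+56*y^5*v+70*y^4*v^2+56*y^3*v^3+28*y^2*v^4+8*y*v^5+v^6)
  + α * (36*y^7+84*y^6*v+126*y^5*v^2+126*y^4*v^3+84*y^3*v^4+36*y^2*v^5+9*y*v^6+v^7)
def nS (ε α y v : ℝ) : ℝ := 6*(5*y^4+10*y^3*v+10*y^2*v^2+5*y*v^3+v^4)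
  + 8*ε * (7*y^6+21*y^5*v+35*y^4*v^2+35*y^3*v^3+21*y^2*v^4+7*y*v^5+v^6)
  + 9*α * (8*y^7+28*y^6*v+56*y^5*v^2+70*y^4*v^3+56*y^3*v^4+28*y^2*v^5+8*y*v^6+v^7)
lemma NN_add (ε α y v : ℝ) : NN ε α (y + v) = NN ε α y + NP ε α y * v + v ^ 2 * nR ε α y v := by
  simp only [NN, NP, nR]; ring
lemma NP_add (ε α y v : ℝ) : NP ε α (y + v) = NP ε α y + v * nS ε α y v := by
  simp only [NP, nS]; ring

lemma hd_curve (G : ℝ × ℝ → ℝ) (hG : Sm G) (c : ℝ → ℝ) (c' y : ℝ) (hc : HasDerivAt c c' y) :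
    HasDerivAt (fun y => G (c y, y)) (c' * fderiv ℝ G (c y, y) (1, 0) + fderiv ℝ G (c y, y) (0, 1)) y := by
  have h1 : HasFDerivAt G (fderiv ℝ G (c y, y)) (c y, y) := (hG.differentiable (by simp)).differentiableAt.hasFDerivAt
  have h2 := HasFDerivAt.comp_hasDerivAt (f := fun y => (c y, y)) y h1 (hc.prodMk (hasDerivAt_id y))
  refine h2.congr_deriv ?_
  rw [show ((c', 1) : ℝ × ℝ) = c' • ((1:ℝ), (0:ℝ)) + ((0:ℝ), (1:ℝ)) by simp, map_add, map_smul]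
  simp

lemma lift2 (ε α : ℝ) (G : ℝ × ℝ → ℝ) (hG : Sm G)
    (h1 : ∀ᶠ y in 𝓝 (0:ℝ), G (-NP ε α y, y) = NN ε α y - y * NP ε α y)
    (h2 : ∀ᶠ y in 𝓝 (0:ℝ), pdy G (-NP ε α y, y) = 0) :
    ∃ z : ℝ × ℝ → ℝ, Sm z ∧ ∀ᶠ p in 𝓝 (0 : ℝ × ℝ),
      G (p.1, p.2 + (p.1 + NP ε α p.2) * z p) = p.1 * p.2 + NN ε α p.2 := by
  have hNP : Sm (NP ε α) := by unfold NP; fun_prop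
  have hNN : Sm (NN ε α) := by unfold NN; fun_prop
  obtain ⟨D, Q, hD, hQ, dD, eQ⟩ := taylor2 (E := ℝ) (fun q => G (q.2 - NP ε α q.1, q.1) - ((q.2 - NP ε α q.1) * q.1 + NN ε α q.1))
    (by fun_prop)
  simp only at dD eQ
  have eD : ∀ y, D y = pdx G (-NP ε α y, y) - y := by
    intro y
    refine (dD y).unique ?_
    have a1 : HasFDerivAt G (fderiv ℝ G (0 - NP ε α y, y)) (0 - NP ε α y, y) := (hG.differentiable (by simp)).differentiableAt.hasFDerivAt
    have a2 : HasDerivAt (fun w : ℝ => w - NP ε α y) 1 0 := (hasDerivAt_id (0:ℝ)).sub_const _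
    have a3 := HasFDerivAt.comp_hasDerivAt (f := fun w : ℝ => (w - NP ε α y, y)) (0:ℝ) a1 (a2.prodMk (hasDerivAt_const (0:ℝ) y))
    have a4 := a3.sub ((a2.mul_const y).add_const (NN ε α y))
    refine a4.congr_deriv ?_
    simp [pdx, dop]
  have hzero : ∀ᶠ y in 𝓝 (0:ℝ), y ^ 4 * (30 + 56 * ε * y ^ 2 + 72 * α * y ^ 3) * D y = 0 := by
    filter_upwards [h1.eventually_nhds, h2] with y e1 e2
    have b1 : HasDerivAt (fun y => -NP ε α y) (-(y ^ 4 * (30 + 56 * ε * y ^ 2 + 72 * α * y ^ 3))) y := by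
      have := (((hasDerivAt_pow 5 y).const_mul 6).add ((hasDerivAt_pow 7 y).const_mul (8 * ε))).add ((hasDerivAt_pow 8 y).const_mul (9 * α))
      refine this.neg.congr_deriv ?_
      norm_num; ring
    have b0 : HasDerivAt (NN ε α) (NP ε α y) y := by
      have := ((hasDerivAt_pow 6 y).add ((hasDerivAt_pow 8 y).const_mul ε)).add ((hasDerivAt_pow 9 y).const_mul α)
      refine this.congr_deriv ?_
      simp only [NP]; norm_num; ring
    have b2 := hd_curve G hG _ _ y b1
    have b3 : HasDerivAt (fun y => NN ε α y - y * NP ε α y) _ y := b0.add ((hasDerivAt_id y).mul b1) |>.congr_of_eventuallyEq (Eventually.of_forall fun y => by simp [sub_eq_add_neg])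
    have b4 := (b2.congr_of_eventuallyEq (e1.mono fun y h => h.symm)).unique b3
    rw [eD]
    simp only [pdx, pdy, dop] at *
    rw [e2] at b4
    simp only [id] at b4
    linear_combination -b4
  have hD0 : ∀ᶠ y in 𝓝 (0:ℝ), D y = 0 := by
    have hne : ∀ᶠ y in 𝓝 (0:ℝ), 30 + 56 * ε * y ^ 2 + 72 * α * y ^ 3 ≠ 0 := by
      have : ContinuousAt (fun y : ℝ => 30 + 56 * ε * y ^ 2 + 72 * α * y ^ 3) 0 := by fun_prop
      exact this.eventually_ne (by norm_num)
    have hp : ∀ᶠ y in 𝓝[≠] (0:ℝ), D y = 0 := by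
      filter_upwards [nhdsWithin_le_nhds hzero, nhdsWithin_le_nhds hne, self_mem_nhdsWithin] with y e1 e2 e3
      have : y ^ 4 ≠ 0 := pow_ne_zero _ e3
      simpa [this, e2, e3] using e1
    exact (ContinuousAt.eventuallyEq_nhds_iff_eventuallyEq_nhdsNE (f := D) (g := fun _ => 0) hD.continuous.continuousAt continuousAt_const).1 hp
  have hG2 : ∀ᶠ y in 𝓝 (0:ℝ), ∀ x, G (x, y) = x * y + NN ε α y + (x + NP ε α y) ^ 2 * Q (y, x + NP ε α y) := by
    filter_upwards [hD0, h1] with y e1 e2 x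
    have := eQ y (x + NP ε α y)
    rw [e1, zero_sub, e2] at this
    rw [add_sub_cancel_right] at this
    linear_combination this
  have hnR : Sm (fun q : ℝ × ℝ => nR ε α q.1 q.2) := by unfold nR; fun_prop
  have hnS : Sm (fun q : ℝ × ℝ => nS ε α q.1 q.2) := by unfold nS; fun_prop
  let W : ℝ × ℝ → ℝ := fun p => p.1 + NP ε α p.2
  have hW : Sm W := by simp only [W]; fun_prop
  have hW0 : W 0 = 0 := by simp [W, NP]
  obtain ⟨z, hz, -, hz1, -⟩ := ift (E := ℝ × ℝ) (fun q => q.2 + q.2 ^ 2 * (fun r : ℝ × ℝ => nR ε α r.1 r.2) (q.1.2, W q.1 * q.2)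
      + (1 + q.2 * (fun r : ℝ × ℝ => nS ε α r.1 r.2) (q.1.2, W q.1 * q.2)) ^ 2 * Q (q.1.2 + W q.1 * q.2, q.1.1 + NP ε α (q.1.2 + W q.1 * q.2)))
      (by
        have e1 : Sm (fun q : (ℝ × ℝ) × ℝ => (fun r : ℝ × ℝ => nR ε α r.1 r.2) (q.1.2, W q.1 * q.2)) := hnR.comp (by fun_prop)
        have e2 : Sm (fun q : (ℝ × ℝ) × ℝ => (fun r : ℝ × ℝ => nS ε α r.1 r.2) (q.1.2, W q.1 * q.2)) := hnS.comp (by fun_prop)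
        fun_prop) (-Q (0, 0)) 1 (by simp [hW0, nR, nS, NP]) (by
          simp only [hW0, nR, nS, NP]
          simpa using (hasDerivAt_id (-Q (0,0))).add_const (Q (0,0))) one_ne_zero
  refine ⟨z, hz, ?_⟩
  have ht : Tendsto (fun p : ℝ × ℝ => p.2 + W p * z p) (𝓝 0) (𝓝 (0:ℝ)) := by
    have : Continuous (fun p : ℝ × ℝ => p.2 + W p * z p) := by
      have := hz.continuous; have := hW.continuous; fun_prop
    simpa [hW0] using this.tendsto 0
  filter_upwards [ht.eventually hG2, hz1] with p e1 e2
  simp only [W] at e1 e2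
  rw [e1]
  rw [NP_add] at e2 ⊢
  rw [NN_add]
  linear_combination (p.1 + NP ε α p.2) ^ 2 * e2

lemma bij_of_det (L : ℝ × ℝ →L[ℝ] ℝ × ℝ)
    (h : (L (1, 0)).1 * (L (0, 1)).2 - (L (1, 0)).2 * (L (0, 1)).1 ≠ 0) : Function.Bijective (⇑L) := by
  have key : ∀ v : ℝ × ℝ, L v = v.1 • L (1, 0) + v.2 • L (0, 1) := by
    intro v
    rw [← map_smul, ← map_smul, ← map_add]; simp
  have hinj : Function.Injective L := by
    rw [injective_iff_map_eq_zero]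
    intro v hv
    rw [key] at hv
    have e1 := congrArg Prod.fst hv
    have e2 := congrArg Prod.snd hv
    simp only [Prod.fst_add, Prod.snd_add, Prod.smul_fst, Prod.smul_snd, smul_eq_mul, Prod.fst_zero, Prod.snd_zero] at e1 e2
    ext
    · refine (mul_eq_zero.1 (?_ : v.1 * _ = 0)).resolve_right h
      linear_combination (L (0,1)).2 * e1 - (L (0,1)).1 * e2
    · refine (mul_eq_zero.1 (?_ : v.2 * _ = 0)).resolve_right h
      linear_combination (L (1,0)).1 * e2 - (L (1,0)).2 * e1
  exact ⟨hinj, (LinearMap.injective_iff_surjective (f := L.toLinearMap)).1 hinj⟩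

lemma lift (ε α : ℝ) (g : ℝ × ℝ → ℝ) (hg : Sm g) (g0 : g 0 = 0) (gx0 : pdx g 0 = 0) (σ : ℝ → ℝ) (hσ : Sm σ) (hσ0 : σ 0 = 0)
    (hcrit : ∀ᶠ y in 𝓝 (0:ℝ), pdy g (σ y, y) = 0)
    (hCE : CE (fun y => (σ y, g (σ y, y))) (nc ε α)) :
    AEquiv (fun p => (p.1, g p)) (fun p => (p.1, p.1 * p.2 + p.2 ^ 6 + ε * p.2 ^ 8 + α * p.2 ^ 9)) := by
  obtain ⟨ψ, τ, ⟨hψ, hψ0, a, b, d, ha, hd, e1, e2⟩, hτ, hτ0, hτd, hγ⟩ := hCE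
  have z00 : ((0:ℝ), (0:ℝ)) = 0 := rfl
  have hp1 : Sm (fun p => (ψ p).1) := contDiff_fst.comp hψ
  have hp2 : Sm (fun p => (ψ p).2) := contDiff_snd.comp hψ
  -- derivative along curves
  have hdc : ∀ (u v : ℝ → ℝ) (u' v' y : ℝ), HasDerivAt u u' y → HasDerivAt v v' y →
      HasDerivAt (fun y => ψ (u y, g (u y, v y))) (fderiv ℝ ψ (u y, g (u y, v y)) (u', u' * pdx g (u y, v y) + v' * pdy g (u y, v y))) y := by
    intro u v u' v' y hu hv
    have a1 : HasFDerivAt g (fderiv ℝ g (u y, v y)) (u y, v y) := (hg.differentiable (by simp)).differentiableAt.hasFDerivAt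
    have a2 := HasFDerivAt.comp_hasDerivAt (f := fun y => (u y, v y)) y a1 (hu.prodMk hv)
    have a3 : HasFDerivAt ψ (fderiv ℝ ψ (u y, g (u y, v y))) (u y, g (u y, v y)) := (hψ.differentiable (by simp)).differentiableAt.hasFDerivAt
    have a4 := HasFDerivAt.comp_hasDerivAt (f := fun y => (u y, g (u y, v y))) y a3 (hu.prodMk a2)
    refine a4.congr_deriv ?_
    congr 2
    rw [show ((u', v') : ℝ × ℝ) = u' • ((1:ℝ), (0:ℝ)) + v' • ((0:ℝ), (1:ℝ)) by simp, map_add, map_smul, map_smul]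
    simp [pdx, pdy, dop]
  obtain ⟨xh, hxh, xh0, xh1, xh2⟩ := ift (E := ℝ × ℝ) (fun q => (fun p => (ψ p).1) (q.2, g (q.2, q.1.2)) - q.1.1)
    (by fun_prop) 0 a (by simp [z00, g0, hψ0]) (by
      have := hdc (fun z => z) (fun _ => 0) 1 0 0 (hasDerivAt_id _) (hasDerivAt_const _ _)
      have h2 := (hasFDerivAt_fst (𝕜 := ℝ) (E := ℝ) (F := ℝ)).comp_hasDerivAt (0:ℝ) this
      refine (h2.sub_const _).congr_deriv ?_
      simp [z00, g0, gx0, e1]) ha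
  simp only at xh1 xh2
  have tτ : Tendsto τ (𝓝 0) (𝓝 0) := by simpa [hτ0] using hτ.continuous.tendsto 0
  have hNP : Sm (NP ε α) := by unfold NP; fun_prop
  have NP0 : NP ε α 0 = 0 := by simp [NP]
  let G : ℝ × ℝ → ℝ := fun p => (fun p => (ψ p).2) (xh (p.1, τ p.2), g (xh (p.1, τ p.2), τ p.2))
  have hG : Sm G := by simp only [G]; fun_prop
  have hx : ∀ᶠ y in 𝓝 (0:ℝ), xh (-NP ε α y, τ y) = σ (τ y) := by
    have ht : Tendsto (fun y => ((-NP ε α y, τ y), σ (τ y))) (𝓝 0) (𝓝 ((0 : ℝ × ℝ), (0:ℝ))) := by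
      have : Continuous (fun y => ((-NP ε α y, τ y), σ (τ y))) := by
        have := hτ.continuous; have := hNP.continuous; have := hσ.continuous; fun_prop
      simpa [hτ0, NP0, hσ0, z00] using this.tendsto 0
    filter_upwards [ht.eventually xh2, hγ] with y h1 h2
    apply h1
    rw [h2]; simp [nc, NP]
  have hG1 : ∀ᶠ y in 𝓝 (0:ℝ), G (-NP ε α y, y) = NN ε α y - y * NP ε α y := by
    filter_upwards [hx, hγ] with y h1 h2
    simp only [G]
    rw [h1, h2]; simp only [nc, NN, NP]; ring
  have hV : ∀ᶠ y in 𝓝 (0:ℝ), (fderiv ℝ ψ (σ (τ y), g (σ (τ y), τ y)) (1, pdx g (σ (τ y), τ y))).1 ≠ 0 := by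
    have hc : Continuous fun y : ℝ => (fderiv ℝ ψ (σ (τ y), g (σ (τ y), τ y)) (1, pdx g (σ (τ y), τ y))).1 := by
      have c1 : Continuous (fderiv ℝ ψ) := hψ.continuous_fderiv (by simp)
      have c2 := (sm_pdx g hg).continuous
      have := hτ.continuous; have := hσ.continuous; have := hg.continuous
      exact continuous_fst.comp ((c1.comp (by fun_prop)).clm_apply (by fun_prop))
    refine hc.continuousAt.eventually_ne ?_
    simp [hτ0, hσ0, z00, g0, gx0, e1, ha]
  have hG2 : ∀ᶠ y in 𝓝 (0:ℝ), pdy G (-NP ε α y, y) = 0 := by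
    have ht : Tendsto (fun y => (-NP ε α y, τ y)) (𝓝 0) (𝓝 (0 : ℝ × ℝ)) := by
      have : Continuous (fun y => (-NP ε α y, τ y)) := by
        have := hτ.continuous; have := hNP.continuous; fun_prop
      simpa [hτ0, NP0, z00] using this.tendsto 0
    filter_upwards [hx, tτ.eventually hcrit, hV, ht.eventually xh1.eventually_nhds] with y h1 h2 h3 h4
    have hu : HasDerivAt (fun w => xh (-NP ε α y, τ w)) (deriv (fun w => xh (-NP ε α y, τ w)) y) y := by
      have : Sm (fun w => xh (-NP ε α y, τ w)) := by fun_prop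
      exact (this.differentiable (by simp)).differentiableAt.hasDerivAt
    set u' := deriv (fun w => xh (-NP ε α y, τ w)) y with hu'
    have hv : HasDerivAt τ (deriv τ y) y := (hτ.differentiable (by simp)).differentiableAt.hasDerivAt
    have k := hdc _ _ _ _ y hu hv
    simp only [h1, h2, mul_zero, add_zero] at k
    rw [show ((u', u' * pdx g (σ (τ y), τ y)) : ℝ × ℝ) = u' • ((1:ℝ), pdx g (σ (τ y), τ y)) by simp, map_smul] at k
    have k1 := (hasFDerivAt_fst (𝕜 := ℝ) (E := ℝ) (F := ℝ)).comp_hasDerivAt y k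
    have k2 := (hasFDerivAt_snd (𝕜 := ℝ) (E := ℝ) (F := ℝ)).comp_hasDerivAt y k
    have tc : Tendsto (fun w => (-NP ε α y, τ w)) (𝓝 y) (𝓝 (-NP ε α y, τ y)) := by
      have : Continuous (fun w => (-NP ε α y, τ w)) := by have := hτ.continuous; fun_prop
      exact this.tendsto y
    have k3 : HasDerivAt (fun _ : ℝ => -NP ε α y) _ y := k1.congr_of_eventuallyEq (by
      filter_upwards [tc.eventually h4] with w h5
      simp only [Function.comp]
      linear_combination -h5)
    have k4 := k3.unique (hasDerivAt_const _ _)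
    simp only [ContinuousLinearMap.coe_fst', Prod.smul_fst, smul_eq_mul] at k4
    have k5 : u' = 0 := (mul_eq_zero.1 k4).resolve_right h3
    have k6 := (hd_pdy G hG (-NP ε α y) y).unique k2
    rw [k6, k5]; simp
  obtain ⟨z, hz, ez⟩ := lift2 ε α G hG hG1 hG2
  let B : ℝ × ℝ → ℝ := fun p => p.2 + (p.1 + NP ε α p.2) * z p
  have hB : Sm B := by simp only [B]; fun_prop
  have B0 : B 0 = 0 := by simp [B, NP0]
  have By : pdy B 0 = 1 := by
    have c1 : HasDerivAt (NP ε α) 0 0 := by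
      have := (((hasDerivAt_pow 5 (0:ℝ)).const_mul 6).add ((hasDerivAt_pow 7 (0:ℝ)).const_mul (8 * ε))).add ((hasDerivAt_pow 8 (0:ℝ)).const_mul (9 * α))
      refine this.congr_deriv ?_
      norm_num
    have c2 := (hasDerivAt_id (0:ℝ)).add ((c1.const_add 0).mul (hd_pdy z hz 0 0))
    have c3 := (hd_pdy B hB 0 0).unique c2
    rw [← z00, c3]; simp [NP0]
  have hxx : pdx xh 0 ≠ 0 := by
    intro h0
    have c1 := hdc _ _ _ _ 0 (hd_pdx xh hxh 0 0) (hasDerivAt_const 0 (0:ℝ))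
    rw [z00, h0, show (((0:ℝ), 0 * pdx g (xh 0, 0) + 0 * pdy g (xh 0, 0)) : ℝ × ℝ) = 0 by simp, map_zero] at c1
    have c2 := (hasFDerivAt_fst (𝕜 := ℝ) (E := ℝ) (F := ℝ)).comp_hasDerivAt (0:ℝ) c1
    have tc : Tendsto (fun w : ℝ => (w, (0:ℝ))) (𝓝 0) (𝓝 (0 : ℝ × ℝ)) := by
      have : Continuous (fun w : ℝ => (w, (0:ℝ))) := by fun_prop
      exact this.tendsto 0
    have c3 : HasDerivAt (fun w : ℝ => w) _ 0 := c2.congr_of_eventuallyEq (by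
      filter_upwards [tc.eventually xh1] with w h5
      simp only [Function.comp]
      linear_combination -h5)
    have := c3.unique (hasDerivAt_id _)
    simp at this
  have hτv : HasDerivAt τ (deriv τ 0) 0 := (hτ.differentiable (by simp)).differentiableAt.hasDerivAt
  refine ⟨fun p => (xh (p.1, τ (B p)), τ (B p)), ψ, by fun_prop, hψ, ?_, hψ0, ?_, ?_, ?_⟩
  · simp [B0, hτ0, z00, xh0]
  · apply bij_of_det
    have hφ2 : HasFDerivAt (fun p => τ (B p)) (deriv τ 0 • fderiv ℝ B 0) 0 := by
      have b1 : HasFDerivAt B (fderiv ℝ B 0) 0 := (hB.differentiable (by simp)).differentiableAt.hasFDerivAt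
      have b2 : HasDerivAt τ (deriv τ 0) (B 0) := by rw [B0]; exact hτv
      exact b2.comp_hasFDerivAt 0 b1
    have b3 : HasFDerivAt xh (fderiv ℝ xh 0) ((fun p : ℝ × ℝ => (p.1, τ (B p))) 0) := by
      simp only [B0, hτ0, Prod.fst_zero, z00]
      exact (hxh.differentiable (by simp)).differentiableAt.hasFDerivAt
    have b4 : HasFDerivAt (fun p : ℝ × ℝ => (p.1, τ (B p))) ((ContinuousLinearMap.fst ℝ ℝ ℝ).prod (deriv τ 0 • fderiv ℝ B 0)) 0 :=
      HasFDerivAt.prodMk hasFDerivAt_fst hφ2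
    have b5 := (b3.comp 0 b4).prodMk hφ2
    have b6 := b5.fderiv
    have e6 : (fun p => (xh (p.1, τ (B p)), τ (B p))) = fun x => ((xh ∘ fun p : ℝ × ℝ => (p.1, τ (B p))) x, τ (B x)) := rfl
    rw [e6, b6]
    have lin : ∀ s t : ℝ, fderiv ℝ xh 0 (s, t) = s * pdx xh 0 + t * pdy xh 0 := by
      intro s t
      rw [show ((s, t) : ℝ × ℝ) = s • ((1:ℝ), (0:ℝ)) + t • ((0:ℝ), (1:ℝ)) by simp, map_add, map_smul, map_smul]
      simp [pdx, pdy, dop]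
    have By' : fderiv ℝ B 0 (0, 1) = 1 := By
    simp only [ContinuousLinearMap.prod_apply, ContinuousLinearMap.comp_apply, smul_apply, ContinuousLinearMap.coe_fst', lin, By', smul_eq_mul]
    have : pdx xh 0 * deriv τ 0 ≠ 0 := mul_ne_zero hxx hτd
    convert this using 1
    ring
  · apply bij_of_det
    rw [e1, e2]; simp [ha, hd]
  · have ht : Tendsto (fun p : ℝ × ℝ => (p.1, τ (B p))) (𝓝 0) (𝓝 (0 : ℝ × ℝ)) := by
      have : Continuous (fun p : ℝ × ℝ => (p.1, τ (B p))) := by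
        have := hτ.continuous; have := hB.continuous; fun_prop
      simpa [hτ0, B0, z00] using this.tendsto 0
    filter_upwards [ez, ht.eventually xh1] with p h1 h2
    refine Prod.ext ?_ ?_
    · simp only at h2 ⊢
      linear_combination h2
    · simp only [G] at h1
      simp only [B]
      rw [h1]; simp only [NN]; ring

/-- Third order jets at the origin. -/
def Jet (f : ℝ → ℝ) (c0 c1 c2 c3 : ℝ) : Prop :=
  ∃ R : ℝ → ℝ, Continuous R ∧ ∀ y, f y = c0 + c1 * y + c2 * y ^ 2 + c3 * y ^ 3 + y ^ 4 * R y

lemma Jet.mul {f g : ℝ → ℝ} {a0 a1 a2 a3 b0 b1 b2 b3 : ℝ} (hf : Jet f a0 a1 a2 a3) (hg : Jet g b0 b1 b2 b3) :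
    Jet (fun y => f y * g y) (a0*b0) (a0*b1+a1*b0) (a0*b2+a1*b1+a2*b0) (a0*b3+a1*b2+a2*b1+a3*b0) := by
  obtain ⟨R, hR, e⟩ := hf
  obtain ⟨S, hS, e'⟩ := hg
  refine ⟨fun y => (a1*b3+a2*b2+a3*b1) + y*(a2*b3+a3*b2) + y^2*(a3*b3) + (a0+a1*y+a2*y^2+a3*y^3) * S y
    + R y * (b0+b1*y+b2*y^2+b3*y^3 + y^4 * S y), by fun_prop, fun y => ?_⟩
  simp only [e, e']; ring

lemma Jet.add {f g : ℝ → ℝ} {a0 a1 a2 a3 b0 b1 b2 b3 : ℝ} (hf : Jet f a0 a1 a2 a3) (hg : Jet g b0 b1 b2 b3) :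
    Jet (fun y => f y + g y) (a0+b0) (a1+b1) (a2+b2) (a3+b3) := by
  obtain ⟨R, hR, e⟩ := hf
  obtain ⟨S, hS, e'⟩ := hg
  refine ⟨fun y => R y + S y, by fun_prop, fun y => ?_⟩
  simp only [e, e']; ring

lemma Jet.smul {f : ℝ → ℝ} {a0 a1 a2 a3 : ℝ} (c : ℝ) (hf : Jet f a0 a1 a2 a3) :
    Jet (fun y => c * f y) (c*a0) (c*a1) (c*a2) (c*a3) := by
  obtain ⟨R, hR, e⟩ := hf
  refine ⟨fun y => c * R y, by fun_prop, fun y => ?_⟩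
  simp only [e]; ring

lemma Jet.shift {f : ℝ → ℝ} {a0 a1 a2 a3 : ℝ} (hf : Jet f a0 a1 a2 a3) :
    Jet (fun y => y * f y) 0 a0 a1 a2 := by
  obtain ⟨R, hR, e⟩ := hf
  refine ⟨fun y => a3 + y * R y, by fun_prop, fun y => ?_⟩
  simp only [e]; ring

lemma Jet.of_eq {f g : ℝ → ℝ} {a0 a1 a2 a3 b0 b1 b2 b3 : ℝ} (hf : Jet f a0 a1 a2 a3) (h : ∀ y, g y = f y)
    (h0 : b0 = a0) (h1 : b1 = a1) (h2 : b2 = a2) (h3 : b3 = a3) : Jet g b0 b1 b2 b3 := by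
  rw [h0, h1, h2, h3, show g = f from funext h]; exact hf

lemma zero_of_punct (h : ℝ → ℝ) (hc : Continuous h) (h0 : ∀ᶠ y in 𝓝[≠] (0:ℝ), h y = 0) : h 0 = 0 := by
  have := (ContinuousAt.eventuallyEq_nhds_iff_eventuallyEq_nhdsNE (f := h) (g := fun _ => 0) (x := 0) hc.continuousAt continuousAt_const).1 h0
  exact this.self_of_nhds

lemma Jet.unique {f : ℝ → ℝ} {a0 a1 a2 a3 : ℝ} (hf : Jet f a0 a1 a2 a3) (h : ∀ᶠ y in 𝓝[≠] (0:ℝ), f y = 0) :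
    a0 = 0 ∧ a1 = 0 ∧ a2 = 0 ∧ a3 = 0 := by
  obtain ⟨R, hR, e⟩ := hf
  have z0 : a0 = 0 := by
    have := zero_of_punct (fun y => a0 + a1 * y + a2 * y ^ 2 + a3 * y ^ 3 + y ^ 4 * R y) (by fun_prop) (h.mono fun y hy => by rw [← e]; exact hy)
    simpa using this
  have z1 : a1 = 0 := by
    have := zero_of_punct (fun y => a1 + a2 * y + a3 * y ^ 2 + y ^ 3 * R y) (by fun_prop) (by
      filter_upwards [h, self_mem_nhdsWithin] with y hy hy0
      rw [e, z0] at hy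
      refine (mul_eq_zero.1 (?_ : y * _ = 0)).resolve_left hy0
      linear_combination hy)
    simpa using this
  have z2 : a2 = 0 := by
    have := zero_of_punct (fun y => a2 + a3 * y + y ^ 2 * R y) (by fun_prop) (by
      filter_upwards [h, self_mem_nhdsWithin] with y hy hy0
      rw [e, z0, z1] at hy
      refine (mul_eq_zero.1 (?_ : y ^ 2 * _ = 0)).resolve_left (pow_ne_zero _ hy0)
      linear_combination hy)
    simpa using this
  have z3 : a3 = 0 := by
    have := zero_of_punct (fun y => a3 + y * R y) (by fun_prop) (by
      filter_upwards [h, self_mem_nhdsWithin] with y hy hy0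
      rw [e, z0, z1, z2] at hy
      refine (mul_eq_zero.1 (?_ : y ^ 3 * _ = 0)).resolve_left (pow_ne_zero _ hy0)
      linear_combination hy)
    simpa using this
  exact ⟨z0, z1, z2, z3⟩

lemma quad (h : ℝ × ℝ → ℝ) (hh : Sm h) (h0 : h 0 = 0) : ∃ (a b : ℝ) (k1 k2 : ℝ → ℝ) (Q : ℝ × ℝ → ℝ), Sm k1 ∧ Sm k2 ∧ Sm Q ∧
    ∀ X Y, h (X, Y) = a * X + b * Y + X ^ 2 * k1 X + X * Y * k2 X + Y ^ 2 * Q (X, Y) := by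
  obtain ⟨D, Q, hD, hQ, -, e⟩ := taylor2 (E := ℝ) h hh
  obtain ⟨k2, hk2, e2, -⟩ := hadamard1 D hD
  obtain ⟨k, hk, e1, -⟩ := hadamard1 (fun x => h (x, 0)) (by fun_prop)
  obtain ⟨k1, hk1, e3, -⟩ := hadamard1 k hk
  refine ⟨k 0, D 0, k1, k2, Q, hk1, hk2, hQ, fun X Y => ?_⟩
  have a1 := e1 X
  have a2 := e3 X
  have a3 := e2 X
  rw [show h (0, 0) = 0 from h0, a2] at a1
  rw [e X Y, a1, a3]; ring

lemma nec_curve (a7 a8 a9 ε α : ℝ) (k l : ℝ → ℝ) (hk : Sm k) (hl : Sm l) (ψ : ℝ × ℝ → ℝ × ℝ) (hψ : Sm ψ) (hψ0 : ψ 0 = 0)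
    (τ : ℝ → ℝ) (hτ : Sm τ) (hτ0 : τ 0 = 0) (hτd : deriv τ 0 ≠ 0)
    (h : ∀ᶠ y in 𝓝 (0:ℝ), ψ (gc a7 a8 a9 k l (τ y)) = nc ε α y) :
    ∃ s : ℝ, s ≠ 0 ∧ ε = s ^ 2 * (a8 - 3 / 5 * a7 ^ 2) ∧ (ε = 0 → α = s ^ 3 * (a9 - 7 / 25 * a7 ^ 3)) := by
  obtain ⟨T, hT, eT, T0⟩ := hadamard1 τ hτ
  obtain ⟨t, ht, et⟩ := taylor1 4 T hT
  simp only [Finset.sum_range_succ, Finset.sum_range_zero, iteratedDeriv_zero] at et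
  set s := T 0 with hs
  have s0 : s ≠ 0 := by rw [T0]; exact hτd
  obtain ⟨p, hp⟩ : ∃ p, iteratedDeriv 1 T 0 / (Nat.factorial 1) = s * p := ⟨_, (mul_div_cancel₀ _ s0).symm⟩
  obtain ⟨q, hq⟩ : ∃ p, iteratedDeriv 2 T 0 / (Nat.factorial 2) = s * p := ⟨_, (mul_div_cancel₀ _ s0).symm⟩
  obtain ⟨r, hr⟩ : ∃ p, iteratedDeriv 3 T 0 / (Nat.factorial 3) = s * p := ⟨_, (mul_div_cancel₀ _ s0).symm⟩
  have eτ : ∀ y, τ y = y * T y := fun y => by rw [eT, hτ0, zero_add]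
  have jT : Jet T s (s*p) (s*q) (s*r) := ⟨t, ht.continuous, fun y => by
    rw [et y, hp, hq, hr]; simp [hs]⟩
  have j2 : Jet (fun y => T y ^ 2) (s^2) (s^2*(2*p)) (s^2*(2*q+p^2)) (s^2*(2*r+2*p*q)) :=
    (jT.mul jT).of_eq (fun y => by ring) (by ring) (by ring) (by ring) (by ring)
  have j3 : Jet (fun y => T y ^ 3) (s^3) (s^3*(3*p)) (s^3*(3*q+3*p^2)) (s^3*(3*r+6*p*q+p^3)) :=
    (jT.mul j2).of_eq (fun y => by ring) (by ring) (by ring) (by ring) (by ring)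
  have j5 : Jet (fun y => T y ^ 5) (s^5) (s^5*(5*p)) (s^5*(5*q+10*p^2)) (s^5*(5*r+20*p*q+10*p^3)) :=
    (j2.mul j3).of_eq (fun y => by ring) (by ring) (by ring) (by ring) (by ring)
  have j6 : Jet (fun y => T y ^ 6) (s^6) (s^6*(6*p)) (s^6*(6*q+15*p^2)) (s^6*(6*r+30*p*q+20*p^3)) :=
    (j3.mul j3).of_eq (fun y => by ring) (by ring) (by ring) (by ring) (by ring)
  have jt1 : Jet τ 0 s (s*p) (s*q) := jT.shift.of_eq eτ rfl rfl rfl rfl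
  have jt2 : Jet (fun y => τ y ^ 2) 0 0 (s^2) (s^2*(2*p)) := (jt1.mul jt1).of_eq (fun y => by ring) (by ring) (by ring) (by ring) (by ring)
  have jt3 : Jet (fun y => τ y ^ 3) 0 0 0 (s^3) := (jt1.mul jt2).of_eq (fun y => by ring) (by ring) (by ring) (by ring) (by ring)
  have j4 : ∀ m : ℝ → ℝ, Sm m → Jet (fun y => τ y ^ 4 * m (τ y)) 0 0 0 0 := fun m hm =>
    ⟨fun y => T y ^ 4 * m (τ y), by have := hT.continuous; have := hm.continuous; have := hτ.continuous; fun_prop,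
      fun y => by
        have e5 : τ y ^ 4 = y ^ 4 * T y ^ 4 := by rw [eτ]; ring
        beta_reduce
        rw [e5]; ring⟩
  have jc : ∀ c : ℝ, Jet (fun _ => c) c 0 0 0 := fun c => ⟨fun _ => 0, continuous_const, fun y => by ring⟩
  let U : ℝ → ℝ := fun y => 6 + 7 * a7 * τ y + 8 * a8 * τ y ^ 2 + 9 * a9 * τ y ^ 3 + (-1) * (τ y ^ 4 * k (τ y))
  let V : ℝ → ℝ := fun y => 5 + 6 * a7 * τ y + 7 * a8 * τ y ^ 2 + 8 * a9 * τ y ^ 3 + (-1) * (τ y ^ 4 * l (τ y))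
  have jU : Jet U 6 (7*a7*s) (7*a7*(s*p)+8*a8*s^2) (7*a7*(s*q)+8*a8*(s^2*(2*p))+9*a9*s^3) :=
    (((((jc 6).add (jt1.smul (7*a7))).add (jt2.smul (8*a8))).add (jt3.smul (9*a9))).add ((j4 k hk).smul (-1))).of_eq
      (fun y => rfl) (by ring) (by ring) (by ring) (by ring)
  have jV : Jet V 5 (6*a7*s) (6*a7*(s*p)+7*a8*s^2) (6*a7*(s*q)+7*a8*(s^2*(2*p))+8*a9*s^3) :=
    (((((jc 5).add (jt1.smul (6*a7))).add (jt2.smul (7*a8))).add (jt3.smul (8*a9))).add ((j4 l hl).smul (-1))).of_eq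
      (fun y => rfl) (by ring) (by ring) (by ring) (by ring)
  have jP := j5.mul jU
  have jS := j6.mul jV
  let P : ℝ → ℝ := fun y => T y ^ 5 * U y
  let S : ℝ → ℝ := fun y => T y ^ 6 * V y
  have cτ := hτ.continuous
  have cT := hT.continuous
  have ck := hk.continuous
  have cl := hl.continuous
  have cP : Continuous P := by simp only [P, U]; fun_prop
  have cS : Continuous S := by simp only [S, V]; fun_prop
  have eg : ∀ y, gc a7 a8 a9 k l (τ y) = (-(y ^ 5 * P y), -(y ^ 6 * S y)) := by
    intro y
    simp only [gc, P, S, U, V, Prod.mk.injEq]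
    have e5 : y ^ 5 * T y ^ 5 = τ y ^ 5 := by rw [eτ]; ring
    have e6 : y ^ 6 * T y ^ 6 = τ y ^ 6 := by rw [eτ]; ring
    constructor
    · rw [← mul_assoc, e5]; ring
    · rw [← mul_assoc, e6]; ring
  have hcomp : ∀ h : ℝ × ℝ → ℝ, Sm h → h 0 = 0 → ∃ (a b : ℝ) (M : ℝ → ℝ), Continuous M ∧
      ∀ y, h (gc a7 a8 a9 k l (τ y)) = -(a * (y ^ 5 * P y)) - b * (y ^ 6 * S y) + y ^ 10 * M y := by
    intro h hh h0
    obtain ⟨a, b, k1, k2, Q, hk1, hk2, hQ, e⟩ := quad h hh h0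
    have := hk1.continuous
    have := hk2.continuous
    have := hQ.continuous
    refine ⟨a, b, fun y => P y ^ 2 * k1 (-(y ^ 5 * P y)) + y * P y * S y * k2 (-(y ^ 5 * P y)) + y ^ 2 * S y ^ 2 * Q (-(y ^ 5 * P y), -(y ^ 6 * S y)), by fun_prop, fun y => ?_⟩
    rw [eg, e]; ring
  obtain ⟨a1, b1, M1, cM1, e1⟩ := hcomp (fun p => (ψ p).1) (contDiff_fst.comp hψ) (by simp [hψ0])
  obtain ⟨a2, b2, M2, cM2, e2⟩ := hcomp (fun p => (ψ p).2) (contDiff_snd.comp hψ) (by simp [hψ0])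
  have h' := nhdsWithin_le_nhds (s := {0}ᶜ) h
  have P0 : P 0 ≠ 0 := by simp [P, U, hτ0, ← hs, s0]
  have E1 : ∀ᶠ y in 𝓝[≠] (0:ℝ), a1 * P y + b1 * (y * S y) + ((-6) + (-8) * ε * y ^ 2 + (-9) * α * y ^ 3 + y ^ 4 * (-(y * M1 y))) = 0 := by
    filter_upwards [h', self_mem_nhdsWithin] with y hy hy0
    have h1 := e1 y
    simp only [hy, nc] at h1
    refine (mul_eq_zero.1 (?_ : y ^ 5 * _ = 0)).resolve_left (pow_ne_zero _ hy0)
    linear_combination h1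
  have a20 : a2 = 0 := by
    have := zero_of_punct (fun y => a2 * P y + b2 * (y * S y) + y * ((-5) + (-7) * ε * y ^ 2 + (-8) * α * y ^ 3 - y ^ 4 * M2 y)) (by fun_prop) (by
      filter_upwards [h', self_mem_nhdsWithin] with y hy hy0
      have h1 := e2 y
      simp only [hy, nc] at h1
      refine (mul_eq_zero.1 (?_ : y ^ 5 * _ = 0)).resolve_left (pow_ne_zero _ hy0)
      linear_combination h1)
    simpa [P0] using this
  have E2 : ∀ᶠ y in 𝓝[≠] (0:ℝ), b2 * S y + ((-5) + (-7) * ε * y ^ 2 + (-8) * α * y ^ 3 + y ^ 4 * (-(M2 y))) = 0 := by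
    filter_upwards [h', self_mem_nhdsWithin] with y hy hy0
    have h1 := e2 y
    simp only [hy, nc, a20] at h1
    refine (mul_eq_zero.1 (?_ : y ^ 6 * _ = 0)).resolve_left (pow_ne_zero _ hy0)
    linear_combination h1
  have jr1 : Jet (fun y => (-6) + (-8) * ε * y ^ 2 + (-9) * α * y ^ 3 + y ^ 4 * (-(y * M1 y))) (-6) 0 (-8*ε) (-9*α) :=
    ⟨fun y => -(y * M1 y), by fun_prop, fun y => by ring⟩
  have jr2 : Jet (fun y => (-5) + (-7) * ε * y ^ 2 + (-8) * α * y ^ 3 + y ^ 4 * (-(M2 y))) (-5) 0 (-7*ε) (-8*α) :=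
    ⟨fun y => -(M2 y), by fun_prop, fun y => by ring⟩
  obtain ⟨u0, u1, u2, u3⟩ := (((jP.smul a1).add (jS.shift.smul b1)).add jr1).unique E1
  obtain ⟨v0, v1, v2, v3⟩ := ((jS.smul b2).add jr2).unique E2
  have ha : a1 * s ^ 5 = 1 := by linarith
  have hb : b2 * s ^ 6 = 1 := by linarith
  obtain ⟨β, hβ⟩ : ∃ β, b1 * s ^ 6 = β := ⟨_, rfl⟩
  have w1 : 30 * p + 6 * (a7 * s) = 0 := by linear_combination v1 - (30 * p + 6 * (a7 * s)) * hb
  have x1 : 30 * p + 7 * (a7 * s) + 5 * β = 0 := by linear_combination u1 - (30 * p + 7 * (a7 * s)) * ha - 5 * hβ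
  have hp' : p = -(a7 * s) / 5 := by linarith
  have hβ' : β = -(a7 * s) / 5 := by linarith
  have w2 : 5 * (6*q+15*p^2) + 6*(a7*s)*(7*p)+7*(a8*s^2) = 7 * ε := by
    linear_combination v2 - (5 * (6*q+15*p^2) + 6*(a7*s)*(7*p)+7*(a8*s^2)) * hb
  have x2 : 6 * (5*q+10*p^2) + 7*(a7*s)*(6*p)+8*(a8*s^2) + β * (30*p+6*(a7*s)) = 8 * ε := by
    linear_combination u2 - (6 * (5*q+10*p^2) + 7*(a7*s)*(6*p)+8*(a8*s^2)) * ha - (30*p+6*(a7*s)) * hβ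
  have w3 : 5*(6*r+30*p*q+20*p^3)+6*(a7*s)*(7*q+21*p^2)+7*(a8*s^2)*(8*p)+8*(a9*s^3) = 8*α := by
    linear_combination v3 - (5*(6*r+30*p*q+20*p^3)+6*(a7*s)*(7*q+21*p^2)+7*(a8*s^2)*(8*p)+8*(a9*s^3)) * hb
  have x3 : 6*(5*r+20*p*q+10*p^3)+7*(a7*s)*(6*q+15*p^2)+8*(a8*s^2)*(7*p)+9*(a9*s^3) + β*(5*(6*q+15*p^2)+6*(a7*s)*(7*p)+7*(a8*s^2)) = 9*α := by
    linear_combination u3 - (6*(5*r+20*p*q+10*p^3)+7*(a7*s)*(6*q+15*p^2)+8*(a8*s^2)*(7*p)+9*(a9*s^3)) * ha - (5*(6*q+15*p^2)+6*(a7*s)*(7*p)+7*(a8*s^2)) * hβ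
  rw [w1] at x2
  rw [w2] at x3
  have hε : ε = s ^ 2 * (a8 - 3 / 5 * a7 ^ 2) := by
    rw [hp'] at x2 w2
    linear_combination w2 - x2
  refine ⟨s, s0, hε, fun h0 => ?_⟩
  rw [h0] at w2 x3 hε
  have h8 : a8 * s ^ 2 = 3 / 5 * (a7 * s) ^ 2 := by linear_combination -hε
  rw [hp', h8] at w2 w3 x3
  have hq' : q = (a7 * s) ^ 2 / 25 := by linear_combination w2 / 30
  rw [hq'] at w3 x3
  linear_combination w3 - x3

lemma det_of_bij (L : ℝ × ℝ →L[ℝ] ℝ × ℝ) (h : Function.Bijective (⇑L)) :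
    (L (1, 0)).1 * (L (0, 1)).2 - (L (1, 0)).2 * (L (0, 1)).1 ≠ 0 := by
  intro hd
  have key : ∀ s t : ℝ, L (s, t) = s • L (1, 0) + t • L (0, 1) := by
    intro s t
    rw [← map_smul, ← map_smul, ← map_add]; simp
  have hz := (injective_iff_map_eq_zero L).1 h.1
  have k1 := hz ((L (0, 1)).2, -(L (1, 0)).2) (by
    rw [key]
    ext
    · simp; linear_combination hd
    · simp; ring)
  have k2 := hz ((L (0, 1)).1, -(L (1, 0)).1) (by
    rw [key]
    ext
    · simp; ring
    · simp; linear_combination -hd)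
  simp only [Prod.mk_eq_zero, neg_eq_zero] at k1 k2
  have k3 : L (1, 0) = 0 := Prod.ext k2.2 k1.2
  have := hz _ k3
  simp at this

lemma bij_near (ψ : ℝ × ℝ → ℝ × ℝ) (hψ : Sm ψ) (h : Function.Bijective (⇑(fderiv ℝ ψ 0))) :
    ∀ᶠ p in 𝓝 (0 : ℝ × ℝ), Function.Injective (⇑(fderiv ℝ ψ p)) := by
  have c : Continuous (fderiv ℝ ψ) := hψ.continuous_fderiv (by simp)
  have c2 : Continuous fun p => (fderiv ℝ ψ p (1, 0)).1 * (fderiv ℝ ψ p (0, 1)).2 - (fderiv ℝ ψ p (1, 0)).2 * (fderiv ℝ ψ p (0, 1)).1 := by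
    fun_prop
  filter_upwards [c2.continuousAt.eventually_ne (det_of_bij _ h)] with p hp
  exact (bij_of_det _ hp).1

lemma nec (ε α : ℝ) (g : ℝ × ℝ → ℝ) (hg : Sm g)
    (hP : ∀ i j, i + j < 7 → tcoeff g i j = if (i, j) = (1, 1) ∨ (i, j) = (0, 6) then 1 else 0)
    (hA : AEquiv (fun p => (p.1, g p)) (fun p => (p.1, p.1 * p.2 + p.2 ^ 6 + ε * p.2 ^ 8 + α * p.2 ^ 9))) :
    ∃ s : ℝ, s ≠ 0 ∧ ε = s ^ 2 * (tcoeff g 0 8 - 3 / 5 * tcoeff g 0 7 ^ 2) ∧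
      (ε = 0 → α = s ^ 3 * (tcoeff g 0 9 - 7 / 25 * tcoeff g 0 7 ^ 3)) := by
  obtain ⟨g0, gx0, σ, k, l, hσ, hk, hl, hσ0, hgc, hcrit, huniq⟩ := structG g hg hP
  obtain ⟨φ, ψ, hφ, hψ, hφ0, hψ0, bφ, bψ, hE⟩ := hA
  have hφ : Sm φ := hφ
  have hψ : Sm ψ := hψ
  have z00 : ((0:ℝ), (0:ℝ)) = 0 := rfl
  have hNP : Sm (NP ε α) := by unfold NP; fun_prop
  have NP0 : NP ε α 0 = 0 := by simp [NP]
  have tc : Tendsto (fun y => (-NP ε α y, y)) (𝓝 0) (𝓝 (0 : ℝ × ℝ)) := by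
    have : Continuous (fun y => (-NP ε α y, y)) := by have := hNP.continuous; fun_prop
    simpa [NP0, z00] using this.tendsto 0
  have tφ : Tendsto φ (𝓝 0) (𝓝 0) := by simpa [hφ0] using hφ.continuous.tendsto 0
  have tf : Tendsto (fun p : ℝ × ℝ => (p.1, g p)) (𝓝 0) (𝓝 0) := by
    have : Continuous (fun p : ℝ × ℝ => (p.1, g p)) := by have := hg.continuous; fun_prop
    simpa [g0, z00] using this.tendsto 0
  -- kernel directions are preserved
  have key : ∀ᶠ y in 𝓝 (0:ℝ), (fderiv ℝ φ (-NP ε α y, y) (0, 1)).1 = 0 ∧ (fderiv ℝ φ (-NP ε α y, y) (0, 1)).2 ≠ 0 ∧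
      pdy g (φ (-NP ε α y, y)) = 0 := by
    filter_upwards [tc.eventually (bij_near φ hφ bφ), (tf.comp (tφ.comp tc)).eventually (bij_near ψ hψ bψ), tc.eventually hE.eventually_nhds] with y h1 h2 h3
    simp only [Function.comp] at h2
    set p : ℝ × ℝ := (-NP ε α y, y) with hp
    set v := fderiv ℝ φ p (0, 1) with hv
    have v0 : v ≠ 0 := by
      intro h0
      have := (injective_iff_map_eq_zero _).1 h1 _ h0
      simp at this
    have d1 : HasFDerivAt φ (fderiv ℝ φ p) p := (hφ.differentiable (by simp)).differentiableAt.hasFDerivAt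
    have d2 : HasFDerivAt g (fderiv ℝ g (φ p)) (φ p) := (hg.differentiable (by simp)).differentiableAt.hasFDerivAt
    have d3 : HasFDerivAt ψ (fderiv ℝ ψ ((φ p).1, g (φ p))) ((φ p).1, g (φ p)) := (hψ.differentiable (by simp)).differentiableAt.hasFDerivAt
    have d4 : HasDerivAt (fun w : ℝ => (-NP ε α y, w)) ((0 : ℝ), (1:ℝ)) y := (hasDerivAt_const y _).prodMk (hasDerivAt_id y)
    have d5 : HasDerivAt (fun w : ℝ => φ (-NP ε α y, w)) v y := HasFDerivAt.comp_hasDerivAt (f := fun w : ℝ => (-NP ε α y, w)) y d1 d4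
    have d6 : HasDerivAt (fun w : ℝ => g (φ (-NP ε α y, w))) (fderiv ℝ g (φ p) v) y := HasFDerivAt.comp_hasDerivAt (f := fun w : ℝ => φ (-NP ε α y, w)) y d2 d5
    have d7 : HasDerivAt (fun w : ℝ => (φ (-NP ε α y, w)).1) v.1 y := (hasFDerivAt_fst (𝕜 := ℝ) (E := ℝ) (F := ℝ)).comp_hasDerivAt y d5
    have d8 : HasDerivAt (fun w : ℝ => ψ ((φ (-NP ε α y, w)).1, g (φ (-NP ε α y, w)))) (fderiv ℝ ψ ((φ p).1, g (φ p)) (v.1, fderiv ℝ g (φ p) v)) y :=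
      HasFDerivAt.comp_hasDerivAt (f := fun w : ℝ => ((φ (-NP ε α y, w)).1, g (φ (-NP ε α y, w)))) y d3 (d7.prodMk d6)
    have d9 : HasDerivAt (fun w : ℝ => ((-NP ε α y, -NP ε α y * w + w ^ 6 + ε * w ^ 8 + α * w ^ 9) : ℝ × ℝ)) 0 y := by
      have := (hasDerivAt_const y (-NP ε α y)).prodMk (((((hasDerivAt_id y).const_mul (-NP ε α y)).add (hasDerivAt_pow 6 y)).add ((hasDerivAt_pow 8 y).const_mul ε)).add ((hasDerivAt_pow 9 y).const_mul α))
      refine this.congr_deriv ?_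
      ext
      · rfl
      · simp [NP]; ring
    have tw : Tendsto (fun w : ℝ => (-NP ε α y, w)) (𝓝 y) (𝓝 p) := by
      have : Continuous (fun w : ℝ => (-NP ε α y, w)) := by fun_prop
      exact this.tendsto y
    have d10 := (d8.congr_of_eventuallyEq ((tw.eventually h3).mono fun w hw => hw.symm)).unique d9
    have d11 := (injective_iff_map_eq_zero _).1 h2 _ d10
    simp only [Prod.mk_eq_zero] at d11
    have v2 : v.2 ≠ 0 := fun h => v0 (Prod.ext d11.1 h)
    refine ⟨d11.1, v2, ?_⟩
    have e := d11.2
    rw [show v = v.2 • ((0:ℝ), (1:ℝ)) from Prod.ext (by simp [d11.1]) (by simp), map_smul] at e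
    exact (smul_eq_zero.1 e).resolve_left (by simpa using v2)
  let τ : ℝ → ℝ := fun y => (φ (-NP ε α y, y)).2
  have hτ : Sm τ := contDiff_snd.comp (hφ.comp (by fun_prop))
  have hτ0 : τ 0 = 0 := by simp [τ, NP0, z00, hφ0]
  have hτd : deriv τ 0 ≠ 0 := by
    have k0 := key.self_of_nhds.2.1
    rw [NP0, neg_zero, z00] at k0
    have c1 : HasDerivAt (fun y => -NP ε α y) 0 0 := by
      have := (((hasDerivAt_pow 5 (0:ℝ)).const_mul 6).add ((hasDerivAt_pow 7 (0:ℝ)).const_mul (8 * ε))).add ((hasDerivAt_pow 8 (0:ℝ)).const_mul (9 * α))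
      refine this.neg.congr_deriv ?_
      norm_num
    have d1 : HasFDerivAt φ (fderiv ℝ φ 0) ((fun y => (-NP ε α y, y)) 0) := by
      simp only [NP0, neg_zero, z00]
      exact (hφ.differentiable (by simp)).differentiableAt.hasFDerivAt
    have d5 := HasFDerivAt.comp_hasDerivAt (f := fun y : ℝ => (-NP ε α y, y)) 0 d1 (c1.prodMk (hasDerivAt_id 0))
    have d7 : HasDerivAt τ _ 0 := (hasFDerivAt_snd (𝕜 := ℝ) (E := ℝ) (F := ℝ)).comp_hasDerivAt 0 d5
    rw [d7.deriv]; exact k0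
  have tτ : Tendsto τ (𝓝 0) (𝓝 0) := by simpa [hτ0] using hτ.continuous.tendsto 0
  refine nec_curve _ _ _ ε α k l hk hl ψ hψ hψ0 τ hτ hτ0 hτd ?_
  filter_upwards [key, (tφ.comp tc).eventually huniq, tτ.eventually hgc, tc.eventually hE] with y h1 h2 h3 h4
  have h5 := h2 h1.2.2
  simp only [Function.comp] at h5
  rw [← h3]
  have h6 : φ (-NP ε α y, y) = (σ (τ y), τ y) := Prod.ext h5 rfl
  rw [h6] at h4
  simp only at h4
  rw [h4]
  simp only [nc, NP, Prod.mk.injEq, true_and]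
  ring

lemma suff (ε α : ℝ) (g : ℝ × ℝ → ℝ) (hg : Sm g) (g0 : g 0 = 0) (gx0 : pdx g 0 = 0) (σ : ℝ → ℝ) (hσ : Sm σ) (hσ0 : σ 0 = 0)
    (hcrit : ∀ᶠ y in 𝓝 (0:ℝ), pdy g (σ y, y) = 0) (γ : ℝ → ℝ × ℝ) (hγ : ∀ᶠ y in 𝓝 (0:ℝ), (σ y, g (σ y, y)) = γ y)
    (hCE : CE γ (nc ε α)) :
    AEquiv (fun p => (p.1, g p)) (fun p => (p.1, p.1 * p.2 + p.2 ^ 6 + ε * p.2 ^ 8 + α * p.2 ^ 9)) := by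
  refine lift ε α g hg g0 gx0 σ hσ hσ0 hcrit ?_
  obtain ⟨ψ, τ, hψ, hτ, hτ0, hτd, h⟩ := hCE
  have tτ : Tendsto τ (𝓝 0) (𝓝 0) := by simpa [hτ0] using hτ.continuous.tendsto 0
  refine ⟨ψ, τ, hψ, hτ, hτ0, hτd, ?_⟩
  filter_upwards [h, tτ.eventually hγ] with y h1 h2
  rw [h2, h1]

theorem stmt5 (f : ℝ × ℝ → ℝ × ℝ) (g : ℝ × ℝ → ℝ) (hf0 : f 0 = 0)
    (hform : HasForm f g 7 (fun i j => if (i, j) = (1, 1) ∨ (i, j) = (0, 6) then 1 else 0)) :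
    (tcoeff g 0 8 - 3 / 5 * tcoeff g 0 7 ^ 2 ≠ 0 ↔
      ∃ ε : ℝ, (ε = 1 ∨ ε = -1) ∧ ∃ α : ℝ,
        AEquiv f (fun p => (p.1, p.1 * p.2 + p.2 ^ 6 + ε * p.2 ^ 8 + α * p.2 ^ 9))) ∧
    ((tcoeff g 0 8 - 3 / 5 * tcoeff g 0 7 ^ 2 = 0 ∧
        tcoeff g 0 9 - 7 / 25 * tcoeff g 0 7 ^ 3 ≠ 0) ↔
      AEquiv f (fun p => (p.1, p.1 * p.2 + p.2 ^ 6 + p.2 ^ 9))) := by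
  obtain ⟨hg, hf, hP⟩ := hform
  have hg : Sm g := hg
  obtain ⟨g0, gx0, σ, k, l, hσ, hk, hl, hσ0, hgc, hcrit, huniq⟩ := structG g hg hP
  have ef : f = fun p => (p.1, g p) := funext hf
  have e2 : (fun p : ℝ × ℝ => (p.1, p.1 * p.2 + p.2 ^ 6 + p.2 ^ 9)) = fun p => (p.1, p.1 * p.2 + p.2 ^ 6 + 0 * p.2 ^ 8 + 1 * p.2 ^ 9) := by
    funext p; simp
  rw [e2, ef]
  refine ⟨⟨fun h => ?_, ?_⟩, ⟨fun h => ?_, fun h => ?_⟩⟩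
  · obtain ⟨ε, hε, α, hCE⟩ := suff_curve1 _ _ _ k l hk hl h
    exact ⟨ε, hε, α, suff ε α g hg g0 gx0 σ hσ hσ0 hcrit _ hgc hCE⟩
  · rintro ⟨ε, hε, α, hA⟩ h0
    obtain ⟨s, -, h1, -⟩ := nec ε α g hg hP hA
    rw [h0, mul_zero] at h1
    rcases hε with h | h <;> rw [h] at h1 <;> norm_num at h1
  · exact suff 0 1 g hg g0 gx0 σ hσ hσ0 hcrit _ hgc (suff_curve2 _ _ _ k l hk hl h.1 h.2)
  · obtain ⟨s, hs, h1, h2⟩ := nec 0 1 g hg hP h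
    have h3 := h2 rfl
    refine ⟨?_, fun h0 => ?_⟩
    · exact (mul_eq_zero.1 h1.symm).resolve_left (pow_ne_zero _ hs)
    · rw [h0, mul_zero] at h3
      norm_num at h3
end
end

section
/- For all real numbers c and d, the polynomial maps F(x,y) = (x, xy + y⁷ + cy⁸ + dy⁹) and G(x,y) = (x, xy + y⁷ + (d − (7/12)c²)y⁹) have A⁹-equivalent 9-jets at the origin: j⁹F(0) ∼_{A⁹} j⁹G(0). -/
open Filter Topology

noncomputable section

/-- A smooth function of the form `y^n • Q` has vanishing derivatives of order `< n` at `0`. -/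
lemma aux_flat (n : ℕ) : ∀ {F : Type} [NormedAddCommGroup F] [NormedSpace ℝ F]
    (Q : ℝ × ℝ → F), ContDiff ℝ (⊤ : ℕ∞) Q → ∀ i < n,
    iteratedFDeriv ℝ i (fun p : ℝ × ℝ => p.2 ^ n • Q p) 0 = 0 := by
  induction n with
  | zero => intro F _ _ Q hQ i hi; omega
  | succ n ih =>
    intro F _ _ Q hQ i hi
    cases i with
    | zero =>
      ext m
      simp
    | succ i =>
      rw [← norm_eq_zero, ← norm_iteratedFDeriv_fderiv, norm_eq_zero]
      have h1 : fderiv ℝ (fun p : ℝ × ℝ => p.2 ^ (n + 1) • Q p) = fun p =>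
          p.2 ^ n • (p.2 • fderiv ℝ Q p +
            ((n + 1 : ℝ) • ContinuousLinearMap.snd ℝ ℝ ℝ).smulRight (Q p)) := by
        funext p
        have hd : HasFDerivAt Q (fderiv ℝ Q p) p :=
          (hQ.differentiable (by simp) p).hasFDerivAt
        have hs : HasFDerivAt (fun p : ℝ × ℝ => p.2) (ContinuousLinearMap.snd ℝ ℝ ℝ) p :=
          hasFDerivAt_snd
        refine (((hs.pow (n + 1)).smul hd).fderiv).trans ?_
        ext v <;> simp [pow_succ, smul_smul] <;> ring_nf
      rw [h1]
      refine ih _ ?_ i (by omega)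
      have hf : ContDiff ℝ (⊤ : ℕ∞) (fderiv ℝ Q) := hQ.fderiv_right (by simp)
      have hs : ContDiff ℝ (⊤ : ℕ∞) (fun p : ℝ × ℝ =>
          ((n + 1 : ℝ) • ContinuousLinearMap.snd ℝ ℝ ℝ).smulRight (Q p)) :=
        ((ContinuousLinearMap.smulRightL ℝ (ℝ × ℝ) F
          ((n + 1 : ℝ) • ContinuousLinearMap.snd ℝ ℝ ℝ)).contDiff).comp hQ
      exact (contDiff_snd.smul hf).add hs

def auxR (e y : ℝ) : ℝ :=
  -e ^ 3 + e ^ 4 * y - e ^ 5 * y ^ 2 + e ^ 6 * y ^ 3 - e ^ 7 * y ^ 4 + e ^ 8 * y ^ 5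

def auxW (e y : ℝ) : ℝ := e ^ 2 + y * auxR e y

def auxU (e y : ℝ) : ℝ := -e + y * auxW e y

def auxS (e y : ℝ) : ℝ := 1 + y * auxU e y

/-- `h / y^7`. -/
def auxK (c d e y : ℝ) : ℝ :=
  auxS e y ^ 7 + c * y * auxS e y ^ 8 + d * y ^ 2 * auxS e y ^ 9

def auxT (c d e y : ℝ) : ℝ :=
  let U := auxU e y
  let W := auxW e y
  let S := auxS e y
  (6 * auxR e y + 15 * (-2 * e * W + y * W ^ 2)
    + (20 * U ^ 3 + 15 * y * U ^ 4 + 6 * y ^ 2 * U ^ 5 + y ^ 3 * U ^ 6))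
  + c * (7 * W + (21 * U ^ 2 + 35 * y * U ^ 3 + 35 * y ^ 2 * U ^ 4 + 21 * y ^ 3 * U ^ 5
    + 7 * y ^ 4 * U ^ 6 + y ^ 5 * U ^ 7))
  + d * (8 * U + 28 * y * U ^ 2 + 56 * y ^ 2 * U ^ 3 + 70 * y ^ 3 * U ^ 4 + 56 * y ^ 4 * U ^ 5
    + 28 * y ^ 5 * U ^ 6 + 8 * y ^ 6 * U ^ 7 + y ^ 7 * U ^ 8)
  + e ^ 9 * y ^ 6 * (S ^ 6 + c * y * S ^ 7 + d * y ^ 2 * S ^ 8)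

lemma auxS_mul (e y : ℝ) : (1 + e * y) * auxS e y = 1 + e ^ 9 * y ^ 9 := by
  unfold auxS auxU auxW auxR; ring

lemma auxK_mul (c d e y : ℝ) (he : c = 6 * e) :
    y ^ 7 * ((1 + e * y) * auxK c d e y) =
      y ^ 7 + (d - 7 / 12 * c ^ 2) * y ^ 9 + y ^ 10 * auxT c d e y := by
  have h1 : (1 + e * y) * auxK c d e y = (1 + e ^ 9 * y ^ 9) *
      (auxS e y ^ 6 + c * y * auxS e y ^ 7 + d * y ^ 2 * auxS e y ^ 8) := by
    rw [← auxS_mul]; unfold auxK; ring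
  have h6 : auxS e y ^ 6 = 1 - 6 * e * y + 21 * e ^ 2 * y ^ 2 + y ^ 3 *
      (6 * auxR e y + 15 * (-2 * e * auxW e y + y * auxW e y ^ 2)
    + (20 * auxU e y ^ 3 + 15 * y * auxU e y ^ 4 + 6 * y ^ 2 * auxU e y ^ 5
      + y ^ 3 * auxU e y ^ 6)) := by
    have a : auxS e y ^ 6 = 1 + 6 * y * auxU e y + 15 * y ^ 2 * auxU e y ^ 2 + y ^ 3 *
        (20 * auxU e y ^ 3 + 15 * y * auxU e y ^ 4 + 6 * y ^ 2 * auxU e y ^ 5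
        + y ^ 3 * auxU e y ^ 6) := by unfold auxS; ring
    have b : 6 * y * auxU e y + 15 * y ^ 2 * auxU e y ^ 2 = - 6 * e * y + 21 * e ^ 2 * y ^ 2
        + y ^ 3 * (6 * auxR e y + 15 * (-2 * e * auxW e y + y * auxW e y ^ 2)) := by
      have b1 : auxU e y = -e + y * auxW e y := rfl
      have b2 : auxU e y = -e + y * (e ^ 2 + y * auxR e y) := rfl
      have b3 : auxU e y ^ 2 = e ^ 2 + y * (-2 * e * auxW e y + y * auxW e y ^ 2) := by
        rw [b1]; ring
      rw [b3, b2]; ring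
    linear_combination a + b
  have h7 : auxS e y ^ 7 = 1 - 7 * e * y + y ^ 2 * (7 * auxW e y + (21 * auxU e y ^ 2
      + 35 * y * auxU e y ^ 3 + 35 * y ^ 2 * auxU e y ^ 4 + 21 * y ^ 3 * auxU e y ^ 5
      + 7 * y ^ 4 * auxU e y ^ 6 + y ^ 5 * auxU e y ^ 7)) := by
    have b1 : auxU e y = -e + y * auxW e y := rfl
    have a : auxS e y ^ 7 = 1 + 7 * y * auxU e y + y ^ 2 * (21 * auxU e y ^ 2
      + 35 * y * auxU e y ^ 3 + 35 * y ^ 2 * auxU e y ^ 4 + 21 * y ^ 3 * auxU e y ^ 5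
      + 7 * y ^ 4 * auxU e y ^ 6 + y ^ 5 * auxU e y ^ 7) := by unfold auxS; ring
    linear_combination a + 7 * y * b1
  have h8 : auxS e y ^ 8 = 1 + y * (8 * auxU e y + 28 * y * auxU e y ^ 2
      + 56 * y ^ 2 * auxU e y ^ 3 + 70 * y ^ 3 * auxU e y ^ 4 + 56 * y ^ 4 * auxU e y ^ 5
      + 28 * y ^ 5 * auxU e y ^ 6 + 8 * y ^ 6 * auxU e y ^ 7 + y ^ 7 * auxU e y ^ 8) := by
    unfold auxS; ring
  rw [h1]
  simp only [auxT]
  subst he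
  linear_combination y ^ 7 * h6 + y ^ 7 * (6 * e * y) * h7 + y ^ 7 * (d * y ^ 2) * h8

/-- The source coordinate change. -/
def auxPhi (c d e : ℝ) (p : ℝ × ℝ) : ℝ × ℝ :=
  ((1 + e * p.2) * (p.1 + e * (p.2 ^ 7 * auxK c d e p.2)), p.2 * auxS e p.2)

/-- The (linear) target coordinate change. -/
def auxPsi (e : ℝ) : ℝ × ℝ →L[ℝ] ℝ × ℝ :=
  (ContinuousLinearMap.fst ℝ ℝ ℝ - e • ContinuousLinearMap.snd ℝ ℝ ℝ).prod
    (ContinuousLinearMap.snd ℝ ℝ ℝ)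

lemma auxPhi_fderiv (c d e : ℝ) :
    fderiv ℝ (auxPhi c d e) 0 = ContinuousLinearMap.id ℝ (ℝ × ℝ) := by
  have h : auxPhi c d e = fun p => p + p.2 •
      ((e * p.1 + (1 + e * p.2) * (e * (p.2 ^ 6 * auxK c d e p.2)), p.2 * auxU e p.2)
        : ℝ × ℝ) := by
    funext p
    ext
    · simp [auxPhi]; ring
    · simp [auxPhi, auxS]; ring
  have hd : Differentiable ℝ (fun p : ℝ × ℝ =>
      ((e * p.1 + (1 + e * p.2) * (e * (p.2 ^ 6 * auxK c d e p.2)), p.2 * auxU e p.2)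
        : ℝ × ℝ)) := by
    unfold auxK auxS auxU auxW auxR
    fun_prop
  have hs : HasFDerivAt (fun p : ℝ × ℝ => p.2) (ContinuousLinearMap.snd ℝ ℝ ℝ) 0 :=
    hasFDerivAt_snd
  rw [h]
  refine (((hasFDerivAt_id (𝕜 := ℝ) (0 : ℝ × ℝ)).add
    (hs.smul (hd 0).hasFDerivAt)).fderiv).trans ?_
  ext v <;> simp

theorem stmt6 (c d : ℝ) :
    JetEquiv 9 (fun p => (p.1, p.1 * p.2 + p.2 ^ 7 + c * p.2 ^ 8 + d * p.2 ^ 9))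
      (fun p => (p.1, p.1 * p.2 + p.2 ^ 7 + (d - 7 / 12 * c ^ 2) * p.2 ^ 9)) := by
  obtain ⟨e, he⟩ : ∃ e : ℝ, c = 6 * e := ⟨c / 6, by ring⟩
  refine ⟨auxPhi c d e, auxPsi e, ?_, (auxPsi e).contDiff, ?_, by simp, ?_, ?_, ?_⟩
  · unfold auxPhi auxK auxS auxU auxW auxR
    fun_prop
  · simp [auxPhi]
  · rw [auxPhi_fderiv]
    exact Function.bijective_id
  · rw [ContinuousLinearMap.fderiv]
    constructor
    · rintro ⟨a, b⟩ ⟨a', b'⟩ hab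
      simp [auxPsi] at hab
      obtain ⟨h1, h2⟩ := hab
      subst h2
      simpa using h1
    · rintro ⟨a, b⟩
      exact ⟨(a + e * b, b), by simp [auxPsi]⟩
  · intro i hi
    let Q : ℝ × ℝ → ℝ × ℝ := fun p =>
      (-(e ^ 10 * (p.1 + e * (p.2 ^ 7 * auxK c d e p.2))),
        e ^ 9 * (p.1 + e * (p.2 ^ 7 * auxK c d e p.2)) + auxT c d e p.2)
    have hQ : ContDiff ℝ (⊤ : ℕ∞) Q := by
      unfold Q auxT auxK auxS auxU auxW auxR
      fun_prop
    let G : ℝ × ℝ → ℝ × ℝ :=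
      fun p => (p.1, p.1 * p.2 + p.2 ^ 7 + (d - 7 / 12 * c ^ 2) * p.2 ^ 9)
    have hG : ContDiff ℝ (⊤ : ℕ∞) G := by
      unfold G
      fun_prop
    have hR : ContDiff ℝ (⊤ : ℕ∞) (fun p : ℝ × ℝ => p.2 ^ 10 • Q p) :=
      (contDiff_snd.pow 10).smul hQ
    have key : (auxPsi e) ∘ (fun p : ℝ × ℝ =>
        (p.1, p.1 * p.2 + p.2 ^ 7 + c * p.2 ^ 8 + d * p.2 ^ 9)) ∘ (auxPhi c d e)
        = G + (fun p : ℝ × ℝ => p.2 ^ 10 • Q p) := by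
      funext ⟨x, y⟩
      have hS := auxS_mul e y
      have hK := auxK_mul c d e y he
      have hKdef : y ^ 7 * auxK c d e y =
          (y * auxS e y) ^ 7 + c * (y * auxS e y) ^ 8 + d * (y * auxS e y) ^ 9 := by
        unfold auxK; ring
      have h2 : (1 + e * y) * (x + e * (y ^ 7 * auxK c d e y)) * (y * auxS e y)
          + (y * auxS e y) ^ 7 + c * (y * auxS e y) ^ 8 + d * (y * auxS e y) ^ 9 =
          x * y + y ^ 7 * ((1 + e * y) * auxK c d e y) +
          y ^ 10 * (e ^ 9 * (x + e * (y ^ 7 * auxK c d e y))) := by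
        linear_combination (x + e * (y ^ 7 * auxK c d e y)) * y * hS - hKdef
      ext
      · simp only [auxPsi, auxPhi, Function.comp, Pi.add_apply, G, Q,
          ContinuousLinearMap.prod_apply, ContinuousLinearMap.sub_apply,
          ContinuousLinearMap.smul_apply, ContinuousLinearMap.coe_fst',
          ContinuousLinearMap.coe_snd', Prod.smul_mk, Prod.mk_add_mk, smul_eq_mul]
        rw [h2]; ring
      · simp only [auxPsi, auxPhi, Function.comp, Pi.add_apply, G, Q,
          ContinuousLinearMap.prod_apply, ContinuousLinearMap.sub_apply,
          ContinuousLinearMap.smul_apply, ContinuousLinearMap.coe_fst',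
          ContinuousLinearMap.coe_snd', Prod.smul_mk, Prod.mk_add_mk, smul_eq_mul]
        rw [h2, hK]; ring
    rw [key, iteratedFDeriv_add_apply (hG.contDiffAt.of_le (by exact_mod_cast le_top))
      (hR.contDiffAt.of_le (by exact_mod_cast le_top)), aux_flat 10 Q hQ i (by omega), add_zero]
end
end
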